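/- arXiv:2309.00963 — 2 statements merged into one kernel-verified Lean document; each statement's English description precedes it below -/
import Mathlib

section
/- Let I = [a,b] be a finite interval and let V : ℝ → ℝ be a continuous bounded function with V ≥ 1. Then there exists a C² positive solution φ of the ODE −φ''(x) + V(x)φ(x) = 0 on I satisfying 1 ≤ φ(x) ≤ e^{(b−a)² ‖V‖_{L^∞(ℝ)}} for all x ∈ I. -/
open MeasureTheory Set

/-- Existence for the truncated first-order system. -/
lemma ode_trunc (a b : ℝ) (hab : a < b) (V : ℝ → ℝ) (M R R' : ℝ) (hM : 0 ≤ M) (hR : 1 ≤ R)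
    (hR' : 0 ≤ R')
    (hVcont : Continuous V) (hVbdd : ∀ x : ℝ, |V x| ≤ M) :
    ∃ u v : ℝ → ℝ, u a = 1 ∧ v a = 0 ∧
      (∀ t ∈ Icc a b, HasDerivWithinAt u (min R' (max 0 (v t))) (Icc a b) t) ∧
      (∀ t ∈ Icc a b, HasDerivWithinAt v (V t * min R (max 1 (u t))) (Icc a b) t) := by
  set f : ℝ → ℝ × ℝ → ℝ × ℝ := fun t x =>
    (min R' (max 0 x.2), V t * min R (max 1 x.1)) with hf
  have hL : 0 ≤ max R' (M * R) := le_max_of_le_left hR'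
  have hba : 0 ≤ b - a := by linarith
  have hPL : IsPicardLindelof f (tmin := a) (tmax := b) ⟨a, left_mem_Icc.2 hab.le⟩ ((1 : ℝ), (0 : ℝ))
      (⟨max R' (M * R), hL⟩ * ⟨b - a, hba⟩) 0 ⟨max R' (M * R), hL⟩ (max 1 (⟨M, hM⟩ * 1)) := by
    constructor
    · intro t ht
      apply LipschitzWith.lipschitzOnWith
      apply LipschitzWith.prodMk
      · exact (LipschitzWith.prod_snd.const_max 0).const_min R'
      · have h1 : LipschitzWith 1 (fun x : ℝ × ℝ => min R (max 1 x.1)) :=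
          (LipschitzWith.prod_fst.const_max 1).const_min R
        have h2 : LipschitzWith ⟨M, hM⟩ (fun y : ℝ => V t * y) := by
          apply LipschitzWith.of_dist_le_mul
          intro x y
          rw [Real.dist_eq, Real.dist_eq, ← mul_sub, abs_mul]
          exact mul_le_mul_of_nonneg_right (hVbdd t) (abs_nonneg _)
        exact h2.comp h1
    · intro x hx
      simp only [hf]
      fun_prop
    · intro t ht x hx
      change ‖f t x‖ ≤ max R' (M * R)
      rw [Prod.norm_def]
      apply max_le_max
      · simp only [hf, Real.norm_eq_abs]
        rw [abs_of_nonneg (le_min hR' (le_max_left _ _))]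
        exact min_le_left _ _
      · simp only [hf, Real.norm_eq_abs, abs_mul]
        rw [abs_of_nonneg (a := min R (max 1 x.1))
          (le_min (by linarith) (le_trans zero_le_one (le_max_left _ _)))]
        exact mul_le_mul (hVbdd t) (min_le_left _ _)
          (le_min (by linarith) (le_trans zero_le_one (le_max_left _ _))) hM
    · simp only [sub_self, NNReal.coe_zero, sub_zero]
      rw [max_eq_left hba]
      exact le_refl _
  obtain ⟨α, h0, hα⟩ := hPL.exists_eq_forall_mem_Icc_hasDerivWithinAt₀
  simp only at h0
  exact ⟨fun t => (α t).1, fun t => (α t).2, by simp [h0], by simp [h0],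
    fun t ht => (hα t ht).fst, fun t ht => (hα t ht).snd⟩

/-- **Existence of a positive bounded solution of `-φ'' + Vφ = 0`.**
If `V` is continuous, bounded by `M`, and `V ≥ 1`, then on any finite interval `[a,b]`
there is a `C²` positive solution `φ` of `-φ'' + Vφ = 0` with
`1 ≤ φ(x) ≤ exp ((b-a)² ‖V‖_∞)` on `[a,b]`. -/
theorem ode_positive_solution_bounds
    (a b : ℝ) (hab : a < b) (V : ℝ → ℝ) (M : ℝ)
    (hVcont : Continuous V) (hVbdd : ∀ x : ℝ, |V x| ≤ M) (hV1 : ∀ x : ℝ, 1 ≤ V x) :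
    ∃ φ : ℝ → ℝ, ContDiff ℝ 2 φ ∧
      (∀ x ∈ Icc a b, -(deriv (deriv φ) x) + V x * φ x = 0) ∧
      (∀ x ∈ Icc a b, 1 ≤ φ x ∧ φ x ≤ Real.exp ((b - a) ^ 2 * M)) := by
  have hM : 0 ≤ M := (abs_nonneg _).trans (hVbdd a)
  have hba : 0 ≤ b - a := by linarith
  set R := Real.exp ((b - a) ^ 2 * M) with hRdef
  have hR : 1 ≤ R := Real.one_le_exp (by positivity)
  have hR0 : 0 ≤ R := by linarith
  set R' := M * R * (b - a) with hR'def
  have hR' : 0 ≤ R' := by positivity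
  obtain ⟨u, v, hu0, hv0, hu, hv⟩ := ode_trunc a b hab V M R R' hM hR hR' hVcont hVbdd
  have huc : ContinuousOn u (Icc a b) := fun t ht => (hu t ht).continuousWithinAt
  have hvc : ContinuousOn v (Icc a b) := fun t ht => (hv t ht).continuousWithinAt
  -- global continuous extension of `u`
  set p : ℝ → ℝ := IccExtend hab.le ((Icc a b).domRestrict u) with hp
  have hpc : Continuous p := (continuousOn_iff_continuous_domRestrict.1 huc).Icc_extend'
  have hpu : ∀ t ∈ Icc a b, p t = u t := fun t ht => by
    rw [hp, IccExtend_of_mem _ _ ht]; rfl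
  set g : ℝ → ℝ := fun t => V t * min R (max 1 (p t)) with hg
  have hgc : Continuous g := by simp only [hg]; fun_prop
  have hg0 : ∀ t, 0 ≤ g t := fun t =>
    mul_nonneg (by linarith [hV1 t]) (le_min hR0 (le_trans zero_le_one (le_max_left _ _)))
  set w : ℝ → ℝ := fun t => ∫ s in a..t, g s with hw
  have hwd : ∀ t, HasDerivAt w (g t) t := fun t => hgc.integral_hasStrictDerivAt a t |>.hasDerivAt
  have hwc : Continuous w := continuous_iff_continuousAt.2 fun t => (hwd t).continuousAt
  set φ : ℝ → ℝ := fun t => 1 + ∫ s in a..t, w s with hφ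
  have hφd : ∀ t, HasDerivAt φ (w t) t := fun t =>
    (hwc.integral_hasStrictDerivAt a t |>.hasDerivAt).const_add 1
  have hsub : ∀ t ∈ Icc a b, Icc a t ⊆ Icc a b := fun t ht => Icc_subset_Icc_right ht.2
  have hint : ∀ t ∈ Icc a b, ∀ s ∈ Ioo a t, s ∈ Icc a b ∧ Icc a b ∈ nhds s := fun t ht s hs =>
    ⟨⟨hs.1.le, hs.2.le.trans ht.2⟩, Icc_mem_nhds hs.1 (hs.2.trans_le ht.2)⟩
  have hwv : ∀ t ∈ Icc a b, w t = v t := by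
    intro t ht
    have := intervalIntegral.integral_eq_sub_of_hasDerivAt_of_le (f := v) (f' := g) ht.1
      (hvc.mono (hsub t ht)) (fun s hs => by
        obtain ⟨h1, h2⟩ := hint t ht s hs
        have := (hv s h1).hasDerivAt h2
        simpa only [hg, hpu s h1] using this) (hgc.intervalIntegrable _ _)
    simp only [hw, this, hv0, sub_zero]
  have humono : MonotoneOn u (Icc a b) := by
    apply monotoneOn_of_hasDerivWithinAt_nonneg (convex_Icc a b) huc
      (f' := fun t => min R' (max 0 (v t)))
    · intro t ht
      exact (hu t (interior_subset ht)).mono interior_subset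
    · intro t ht
      exact le_min hR' (le_max_left _ _)
  have hu1 : ∀ t ∈ Icc a b, 1 ≤ u t := fun t ht => by
    rw [← hu0]; exact humono (left_mem_Icc.2 hab.le) ht ht.1
  have hw0 : ∀ t, a ≤ t → 0 ≤ w t := fun t ht =>
    intervalIntegral.integral_nonneg ht fun s _ => hg0 s
  have hwle : ∀ t ∈ Icc a b, w t ≤ M * min R (u t) * (t - a) := by
    intro t ht
    have h := intervalIntegral.integral_mono_on (μ := volume) (f := g) (g := fun _ => M * min R (u t)) ht.1
      (hgc.intervalIntegrable a t) (continuous_const.intervalIntegrable a t) (fun s hs => by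
        have hs' := hsub t ht hs
        simp only [hg, hpu s hs', max_eq_right (hu1 s hs')]
        exact mul_le_mul ((le_abs_self _).trans (hVbdd s))
          (min_le_min le_rfl (humono hs' ht hs.2))
          (le_min hR0 (by linarith [hu1 s hs'])) hM)
    rw [intervalIntegral.integral_const, smul_eq_mul] at h
    simp only [hw]; linarith
  have hwR' : ∀ t ∈ Icc a b, w t ≤ R' := fun t ht => by
    have h1 : min R (u t) ≤ R := min_le_left _ _
    calc w t ≤ _ := hwle t ht
      _ ≤ M * R * (b - a) := by
        gcongr
        · linarith [ht.1]
        · exact ht.2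
  have hφu : ∀ t ∈ Icc a b, φ t = u t := by
    intro t ht
    have := intervalIntegral.integral_eq_sub_of_hasDerivAt_of_le (f := u) (f' := w) ht.1
      (huc.mono (hsub t ht)) (fun s hs => by
        obtain ⟨h1, h2⟩ := hint t ht s hs
        have := (hu s h1).hasDerivAt h2
        rwa [← hwv s h1, max_eq_right (hw0 s h1.1), min_eq_right (hwR' s h1)] at this)
      (hwc.intervalIntegrable _ _)
    simp only [hφ, this, hu0]; ring
  set K := M * (b - a) with hK
  have hexp : AntitoneOn (fun t => φ t * Real.exp (-(K * (t - a)))) (Icc a b) := by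
    have hd : ∀ t, HasDerivAt (fun t => φ t * Real.exp (-(K * (t - a))))
        (w t * Real.exp (-(K * (t - a))) + φ t * (Real.exp (-(K * (t - a))) * (-(K * 1)))) t :=
      fun t => (hφd t).mul ((((hasDerivAt_id t).sub_const a).const_mul K).neg.exp)
    apply antitoneOn_of_hasDerivWithinAt_nonpos (convex_Icc a b)
      (fun t _ => (hd t).continuousAt.continuousWithinAt) (fun t _ => (hd t).hasDerivWithinAt)
    intro t ht
    have ht := interior_subset ht
    have h1 : w t ≤ K * φ t := by
      have h1 : min R (u t) ≤ u t := min_le_right _ _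
      have h2 := hu1 t ht
      calc w t ≤ _ := hwle t ht
        _ ≤ M * u t * (b - a) := by
          gcongr
          · linarith [ht.1]
          · exact ht.2
        _ = K * φ t := by rw [hφu t ht]; ring
    nlinarith [Real.exp_pos (-(K * (t - a)))]
  have hφR : ∀ t ∈ Icc a b, φ t ≤ R := by
    intro t ht
    have h := hexp (left_mem_Icc.2 hab.le) ht ht.1
    have ha : φ a = 1 := by simp [hφ]
    simp only [ha, sub_self, mul_zero, neg_zero, Real.exp_zero, mul_one] at h
    rw [Real.exp_neg, ← div_eq_mul_inv, div_le_one (Real.exp_pos _)] at h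
    refine h.trans (Real.exp_le_exp.2 ?_)
    calc K * (t - a) ≤ K * (b - a) := by
          gcongr
          exact ht.2
      _ = _ := by rw [hK]; ring
  have hdφ : deriv φ = w := funext fun t => (hφd t).deriv
  have hdw : deriv w = g := funext fun t => (hwd t).deriv
  refine ⟨φ, ?_, ?_, ?_⟩
  · have hw1 : ContDiff ℝ 1 w := contDiff_one_iff_deriv.2
      ⟨fun t => (hwd t).differentiableAt, by rw [hdw]; exact hgc⟩
    rw [show (2 : WithTop ℕ∞) = 1 + 1 by norm_num, contDiff_succ_iff_deriv]
    refine ⟨fun t => (hφd t).differentiableAt, by simp, by rw [hdφ]; exact hw1⟩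
  · intro x hx
    have h1 := hφR x hx
    rw [hφu x hx] at h1
    rw [hdφ, hdw, hφu x hx]
    simp only [hg, hpu x hx, max_eq_right (hu1 x hx), min_eq_right h1]
    ring
  · intro x hx
    exact ⟨by rw [hφu x hx]; exact hu1 x hx, hφR x hx⟩
end

section
/- Let ℓ ∈ ℤ, let V : ℝ → ℝ be a continuous bounded function with V ≥ 1, and let ω ⊂ [ℓ, ℓ+1] be a measurable set with |ω| > 0. Then there exist constants α ∈ (0,1) and C > 0, depending only on V and |ω|, such that every real-valued H²_loc solution φ of the 2D elliptic equation −Δφ(x,y) + V(x)φ(x,y) = 0 with Neumann condition ∂_yφ(x,0) = 0 satisfies sup_{D₁ℓ}|φ| ≤ C (sup_{ω×{0}} |φ|)^α (sup_{D₂ℓ}|φ|)^{1−α}, where D₁ℓ = [ℓ, ℓ+1] × [−1/2, 1/2] and D₂ℓ = [ℓ−1, ℓ+2] × [−3/2, 3/2]. -/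
open MeasureTheory Set
namespace LPN

/-- twice the Wirtinger derivative -/
noncomputable def dbar (f : ℂ → ℂ) (z : ℂ) : ℂ :=
  fderiv ℝ f z 1 + Complex.I * fderiv ℝ f z Complex.I

lemma clm_rot (L : ℂ →L[ℝ] ℂ) (a b : ℝ) (h : a ^ 2 + b ^ 2 = 1) :
    L 1 + Complex.I * L Complex.I
      = ((a : ℂ) + b * Complex.I) * (L (a + b * Complex.I)
        + Complex.I * L (Complex.I * (a + b * Complex.I))) := by
  have h1 : L ((a : ℂ) + b * Complex.I) = a * L 1 + b * L Complex.I := by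
    have : ((a : ℂ) + b * Complex.I) = a • (1 : ℂ) + b • Complex.I := by simp
    rw [this, map_add, map_smul, map_smul]; simp
  have h2 : L (Complex.I * ((a : ℂ) + b * Complex.I)) = a * L Complex.I - b * L 1 := by
    have : Complex.I * ((a : ℂ) + b * Complex.I) = a • Complex.I - b • (1 : ℂ) := by
      simp [mul_add, ← mul_assoc, mul_comm]
      try ring
    rw [this, map_sub, map_smul, map_smul]; simp
  have h' : (a : ℂ) ^ 2 + (b : ℂ) ^ 2 = 1 := by exact_mod_cast h
  rw [h1, h2]
  linear_combination (-(L 1) - Complex.I * L Complex.I) * h' +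
    ((b : ℂ) ^ 2 * L 1 - (a : ℂ) * b * L Complex.I) * Complex.I_mul_I

/-- unit vector -/
noncomputable def ev (θ : ℝ) : ℂ := (Real.cos θ : ℂ) + Real.sin θ * Complex.I

lemma continuous_ev : Continuous ev := by unfold ev; fun_prop

lemma norm_ev (θ : ℝ) : ‖ev θ‖ = 1 := by
  unfold ev
  simp

lemma hasDerivAt_ev (θ : ℝ) : HasDerivAt ev (Complex.I * ev θ) θ := by
  unfold ev
  have h1 := (Real.hasDerivAt_cos θ).ofReal_comp
  have h2 := ((Real.hasDerivAt_sin θ).ofReal_comp).mul_const Complex.I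
  refine (h1.add h2).congr_deriv ?_
  push_cast
  linear_combination (-Complex.sin θ) * Complex.I_mul_I

lemma pompeiu (h : ℂ → ℂ) (hh : ContDiff ℝ 1 h) (hc : HasCompactSupport h) :
    ∫ ζ : ℂ, ζ⁻¹ * dbar h ζ = -(2 * Real.pi) * h 0 := by
  obtain ⟨R, hR0, hR⟩ := hc.isCompact.isBounded.exists_pos_norm_lt
  have hDc : Continuous (fderiv ℝ h) := hh.continuous_fderiv one_ne_zero
  have hD0 : ∀ z : ℂ, R < ‖z‖ → fderiv ℝ h z = 0 := by
    intro z hz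
    by_contra hne
    have : z ∈ tsupport h := support_fderiv_subset ℝ hne
    exact absurd (hR z this) (not_lt.mpr hz.le)
  set A : ℝ × ℝ → ℂ := fun p => fderiv ℝ h ((p.1 : ℂ) * ev p.2) (ev p.2) with hA
  set B : ℝ × ℝ → ℂ := fun p => fderiv ℝ h ((p.1 : ℂ) * ev p.2) (Complex.I * ev p.2) with hB
  have hev := continuous_ev
  have hAc : Continuous A := by
    rw [hA]
    exact (hDc.comp (by fun_prop)).clm_apply (by fun_prop)
  have hBc : Continuous B := by
    rw [hB]
    exact (hDc.comp (by fun_prop)).clm_apply (by fun_prop)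
  have hz : ∀ p : ℝ × ℝ, R < p.1 → fderiv ℝ h ((p.1 : ℂ) * ev p.2) = 0 := by
    intro p hp
    apply hD0
    rw [norm_mul, norm_ev, mul_one, Complex.norm_real, Real.norm_eq_abs]
    exact lt_of_lt_of_le hp (le_abs_self _)
  have key : ∀ F : ℝ × ℝ → ℂ, Continuous F → (∀ p : ℝ × ℝ, R < p.1 → F p = 0) →
      IntegrableOn F (Ioi (0:ℝ) ×ˢ Ioo (-Real.pi) Real.pi) := by
    intro F hF hF0
    have h1 : IntegrableOn F (Icc (0:ℝ) R ×ˢ Icc (-Real.pi) Real.pi) :=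
      hF.continuousOn.integrableOn_compact (isCompact_Icc.prod isCompact_Icc)
    refine h1.of_forall_sdiff_eq_zero (measurableSet_Ioi.prod measurableSet_Ioo) ?_
    rintro ⟨r, t⟩ ⟨⟨hr, ht⟩, hn⟩
    apply hF0
    by_contra hle
    exact hn ⟨⟨le_of_lt hr, not_lt.mp hle⟩, ⟨ht.1.le, ht.2.le⟩⟩
  have hAi := key A hAc (fun p hp => by simp [hA, hz p hp])
  have hBi := key B hBc (fun p hp => by simp [hB, hz p hp])
  rw [← Complex.integral_comp_polarCoord_symm]
  have htar : polarCoord.target = Ioi (0:ℝ) ×ˢ Ioo (-Real.pi) Real.pi := rfl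
  rw [htar]
  have hcongr : ∫ p in Ioi (0:ℝ) ×ˢ Ioo (-Real.pi) Real.pi,
      p.1 • ((Complex.polarCoord.symm p)⁻¹ * dbar h (Complex.polarCoord.symm p))
      = ∫ p in Ioi (0:ℝ) ×ˢ Ioo (-Real.pi) Real.pi, (A p + Complex.I * B p) := by
    refine setIntegral_congr_fun (measurableSet_Ioi.prod measurableSet_Ioo) ?_
    rintro ⟨r, t⟩ ⟨hr, ht⟩
    have hr' : (r : ℂ) ≠ 0 := by exact_mod_cast (ne_of_gt hr)
    have he : ev t ≠ 0 := by
      intro h0; have := norm_ev t; rw [h0] at this; simp at this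
    have hp : Complex.polarCoord.symm (r, t) = (r : ℂ) * ev t := by
      rw [Complex.polarCoord_symm_apply]; rfl
    simp only [hp, hA, hB, dbar]
    rw [clm_rot (fderiv ℝ h ((r : ℂ) * ev t)) (Real.cos t) (Real.sin t)
      (by rw [add_comm]; exact Real.sin_sq_add_cos_sq t)]
    change r • (((r : ℂ) * ev t)⁻¹ * (ev t * _)) = _
    rw [Complex.real_smul]
    change (r : ℂ) * (((r : ℂ) * ev t)⁻¹ * (ev t * ((fderiv ℝ h (↑r * ev t)) (ev t) +
      Complex.I * (fderiv ℝ h (↑r * ev t)) (Complex.I * ev t)))) = _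
    generalize fderiv ℝ h (↑r * ev t) = Q
    generalize Q (Complex.I * ev t) = Q2
    field_simp
  rw [hcongr, integral_add hAi (hBi.const_mul _), integral_const_mul]
  have hA' : ∫ p in Ioi (0:ℝ) ×ˢ Ioo (-Real.pi) Real.pi, A p = -(2 * Real.pi) * h 0 := by
    rw [Measure.volume_eq_prod, ← setIntegral_prod_swap, setIntegral_prod]
    · have : ∀ t : ℝ, ∫ r in Ioi (0:ℝ), A (r, t) = - h 0 := by
        intro t
        have hk : ContDiff ℝ 1 (fun r : ℝ => h ((r : ℂ) * ev t)) :=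
          hh.comp (Complex.ofRealCLM.contDiff.mul contDiff_const)
        have hks : HasCompactSupport (fun r : ℝ => h ((r : ℂ) * ev t)) := by
          refine HasCompactSupport.intro (isCompact_Icc (a := -R) (b := R)) ?_
          intro r hr
          by_contra hne
          have h3 := hR _ (subset_tsupport h hne)
          rw [norm_mul, norm_ev, mul_one, Complex.norm_real, Real.norm_eq_abs, abs_lt] at h3
          exact hr ⟨h3.1.le, h3.2.le⟩
        have h4 := hks.integral_Ioi_deriv_eq hk 0
        simp only [Complex.ofReal_zero, zero_mul] at h4
        rw [← h4]
        congr 1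
        ext r
        have h5 : HasDerivAt (fun r : ℝ => (r : ℂ) * ev t) (ev t) r := by
          simpa using (Complex.ofRealCLM.hasDerivAt (x := r)).mul_const (ev t)
        have h6 := ((hh.differentiable one_ne_zero) ((r : ℂ) * ev t)).hasFDerivAt.comp_hasDerivAt r h5
        exact h6.deriv.symm
      simp only [Prod.swap_prod_mk, this]
      simp [Real.pi_pos.le]
      left; norm_cast; ring
    · have := hAi
      rw [Measure.volume_eq_prod] at this
      exact this.swap
  have hB' : ∫ p in Ioi (0:ℝ) ×ˢ Ioo (-Real.pi) Real.pi, B p = 0 := by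
    rw [Measure.volume_eq_prod, setIntegral_prod]
    · refine setIntegral_eq_zero_of_forall_eq_zero ?_
      intro r hr
      have hr' : (r : ℂ) ≠ 0 := by exact_mod_cast (ne_of_gt hr)
      rw [← integral_Ioc_eq_integral_Ioo,
        ← intervalIntegral.integral_of_le (by linarith [Real.pi_pos])]
      have h7 : ∀ t ∈ uIcc (-Real.pi) Real.pi,
          HasDerivAt (fun t => (r : ℂ)⁻¹ * h ((r : ℂ) * ev t)) (B (r, t)) t := by
        intro t _
        have h8 : HasDerivAt (fun t => (r : ℂ) * ev t) ((r : ℂ) * (Complex.I * ev t)) t :=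
          (hasDerivAt_ev t).const_mul _
        have h9 := (((hh.differentiable one_ne_zero)
          ((r : ℂ) * ev t)).hasFDerivAt.comp_hasDerivAt t h8).const_mul (r : ℂ)⁻¹
        refine h9.congr_deriv ?_
        rw [← Complex.real_smul (x := r) (z := Complex.I * ev t), map_smul, Complex.real_smul, ← mul_assoc,
          inv_mul_cancel₀ hr', one_mul]
      rw [intervalIntegral.integral_eq_sub_of_hasDerivAt h7
        ((hBc.comp (by fun_prop : Continuous fun t : ℝ => (r, t))).intervalIntegrable _ _)]
      simp [ev]
    · have := hBi
      rwa [Measure.volume_eq_prod] at this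
  rw [hA', hB']; simp

end LPN
namespace LPN

lemma locInt_inv : LocallyIntegrable (fun z : ℂ => z⁻¹) := by
  refine locallyIntegrable_of_norm_le_rpow (C := 1) (α := 1) ?_ ?_ ?_ ?_
  · simp [Complex.finrank_real_complex]
  · simp [Complex.finrank_real_complex]
  · refine Filter.Eventually.of_forall fun z => ?_
    rw [norm_inv, one_mul, Real.rpow_neg_one]
  · exact (measurable_inv).aestronglyMeasurable

lemma cauchyT_aux (g : ℂ → ℂ) (hg : ContDiff ℝ 1 g) (hc : HasCompactSupport g) :
    ∃ s : ℂ → ℂ, ContDiff ℝ 1 s ∧ (∀ z, dbar s z = g z) ∧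
      ∀ z, s z = (2 * Real.pi : ℂ)⁻¹ * ∫ ζ : ℂ, ζ⁻¹ * g (z - ζ) := by
  set L := ContinuousLinearMap.mul ℝ ℂ with hL
  set u : ℂ → ℂ := convolution (fun z : ℂ => z⁻¹) g L volume with hu
  have hu1 : ContDiff ℝ 1 u := hc.contDiff_convolution_right (n := 1) L locInt_inv hg
  have hpi : (2 * Real.pi : ℂ) ≠ 0 := by
    have := Real.pi_ne_zero
    simp [this]
  refine ⟨fun z => (2 * Real.pi : ℂ)⁻¹ * u z, contDiff_const.mul hu1, ?_, ?_⟩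
  · intro z
    have h1 : HasFDerivAt u _ z := hc.hasFDerivAt_convolution_right L locInt_inv hg z
    have hfd : HasCompactSupport (fderiv ℝ g) := hc.fderiv ℝ
    have hce : ConvolutionExistsAt (fun z : ℂ => z⁻¹) (fderiv ℝ g) z (L.precompR ℂ) volume :=
      (hfd.convolutionExists_right (L.precompR ℂ) locInt_inv (hg.continuous_fderiv one_ne_zero)) z
    have h3 : ∀ v : ℂ, fderiv ℝ u z v = ∫ ζ : ℂ, ζ⁻¹ * fderiv ℝ g (z - ζ) v := by
      intro v
      rw [h1.fderiv]
      unfold convolution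
      rw [ContinuousLinearMap.integral_apply hce]
      rfl
    have hjint : ∀ v : ℂ, Integrable (fun ζ : ℂ => ζ⁻¹ * fderiv ℝ g (z - ζ) v) := by
      intro v
      exact hce.apply_continuousLinearMap v
    have h4 : dbar (fun z => (2 * Real.pi : ℂ)⁻¹ * u z) z = (2 * Real.pi : ℂ)⁻¹ * dbar u z := by
      have := (h1.differentiableAt.hasFDerivAt.const_mul (2 * Real.pi : ℂ)⁻¹).fderiv
      unfold dbar
      rw [this]
      simp
      ring
    rw [h4]
    have h5 : dbar u z = ∫ ζ : ℂ, ζ⁻¹ * dbar g (z - ζ) := by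
      unfold dbar
      rw [h3, h3, ← integral_const_mul, ← integral_add (hjint _) ((hjint _).const_mul _)]
      congr 1
      ext ζ
      ring
    set h : ℂ → ℂ := fun ζ => g (z - ζ) with hh
    have hh1 : ContDiff ℝ 1 h := hg.comp (contDiff_const.sub contDiff_id)
    have hh2 : HasCompactSupport h := hc.comp_homeomorph (Homeomorph.subLeft z)
    have h6 := pompeiu h hh1 hh2
    have h7 : ∀ ζ, dbar h ζ = - dbar g (z - ζ) := by
      intro ζ
      have h8 : HasFDerivAt h _ ζ :=
        ((hg.differentiable one_ne_zero) (z - ζ)).hasFDerivAt.comp ζ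
          ((hasFDerivAt_id (𝕜 := ℝ) ζ).const_sub z)
      unfold dbar
      rw [h8.fderiv]
      simp
      ring
    simp only [h7, mul_neg, integral_neg] at h6
    have h9 : h 0 = g z := by simp [hh]
    rw [h9] at h6
    rw [h5]
    have h10 : ∫ ζ : ℂ, ζ⁻¹ * dbar g (z - ζ) = 2 * Real.pi * g z := by
      linear_combination -h6
    rw [h10]
    field_simp
  · intro z
    rfl

lemma cauchyT : ∃ C0 : ℝ, 0 < C0 ∧ ∀ r1 r2 : ℝ, 0 < r1 → r1 < r2 → r2 ≤ 2 →
    ∀ (g : ℂ → ℂ) (K : ℝ), ContDiffOn ℝ 1 g (Metric.ball 0 r2) → 0 ≤ K →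
      (∀ z ∈ Metric.ball (0:ℂ) r2, ‖g z‖ ≤ K) →
      ∃ s : ℂ → ℂ, ContDiff ℝ 1 s ∧ (∀ z ∈ Metric.ball (0:ℂ) r1, dbar s z = g z) ∧
        ∀ z ∈ Metric.ball (0:ℂ) r1, ‖s z‖ ≤ C0 * K := by
  have hI : IntegrableOn (fun ζ : ℂ => ‖ζ⁻¹‖) (Metric.closedBall 0 4) :=
    (locInt_inv.integrableOn_isCompact (isCompact_closedBall 0 4)).norm
  set J : ℝ := ∫ ζ in Metric.closedBall (0:ℂ) 4, ‖ζ⁻¹‖ with hJ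
  have hJ0 : 0 ≤ J := integral_nonneg fun _ => norm_nonneg _
  refine ⟨J + 1, by linarith, ?_⟩
  intro r1 r2 h1 h12 h2 g K hg hK hgK
  let χ : ContDiffBump (0 : ℂ) := ⟨r1, (r1 + r2) / 2, h1, by linarith⟩
  have hχ : ContDiff ℝ 1 (χ : ℂ → ℝ) := χ.contDiff
  set G : ℂ → ℂ := fun z => (χ z : ℂ) * g z with hG
  have hts : tsupport (χ : ℂ → ℝ) = Metric.closedBall 0 ((r1 + r2) / 2) := χ.tsupport_eq
  have htsG : tsupport G ⊆ Metric.closedBall 0 ((r1 + r2) / 2) := by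
    rw [← hts]
    refine closure_mono ?_
    intro z hz hz0
    apply hz
    simp [hG, show χ z = 0 from hz0]
  have hGc : HasCompactSupport G :=
    (isCompact_closedBall (0:ℂ) ((r1 + r2) / 2)).of_isClosed_subset (isClosed_tsupport _) htsG
  have hG1 : ContDiff ℝ 1 G := by
    rw [contDiff_iff_contDiffAt]
    intro z
    by_cases hz : z ∈ tsupport G
    swap
    · exact contDiffAt_const.congr_of_eventuallyEq (notMem_tsupport_iff_eventuallyEq.mp hz)
    have hz' : z ∈ Metric.ball (0:ℂ) r2 := by
      have := htsG hz
      rw [Metric.mem_closedBall] at this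
      rw [Metric.mem_ball]; linarith
    have hgz : ContDiffAt ℝ 1 g z := hg.contDiffAt (Metric.isOpen_ball.mem_nhds hz')
    exact (Complex.ofRealCLM.contDiff.comp hχ).contDiffAt.mul hgz
  have hGK : ∀ z, ‖G z‖ ≤ K := by
    intro z
    by_cases hz : z ∈ Metric.ball (0:ℂ) r2
    · simp only [hG, norm_mul, Complex.norm_real, Real.norm_eq_abs]
      rw [abs_of_nonneg χ.nonneg]
      calc χ z * ‖g z‖ ≤ 1 * K :=
            mul_le_mul χ.le_one (hgK z hz) (norm_nonneg _) zero_le_one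
        _ = K := one_mul _
    · have : G z = 0 := by
        by_contra hne
        have := htsG (subset_tsupport G hne)
        rw [Metric.mem_closedBall] at this
        apply hz; rw [Metric.mem_ball]; linarith
      rw [this, norm_zero]; exact hK
  obtain ⟨s, hs1, hs2, hs3⟩ := cauchyT_aux G hG1 hGc
  refine ⟨s, hs1, ?_, ?_⟩
  · intro z hz
    rw [hs2, hG]
    have : χ z = 1 := χ.one_of_mem_closedBall (Metric.ball_subset_closedBall hz)
    simp [this]
  · intro z hz
    rw [hs3, norm_mul]
    have hjint : ‖∫ ζ : ℂ, ζ⁻¹ * G (z - ζ)‖ ≤ J * K := by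
      have e1 : ∫ ζ : ℂ, ζ⁻¹ * G (z - ζ) = ∫ ζ in Metric.closedBall (0:ℂ) 4, ζ⁻¹ * G (z - ζ) := by
        rw [setIntegral_eq_integral_of_forall_compl_eq_zero]
        intro ζ hζ
        have : G (z - ζ) = 0 := by
          by_contra hne
          have h3 := htsG (subset_tsupport G hne)
          rw [mem_closedBall_zero_iff] at h3
          rw [mem_ball_zero_iff] at hz
          apply hζ
          rw [mem_closedBall_zero_iff]
          have : ‖ζ‖ ≤ ‖z‖ + ‖z - ζ‖ := by
            have := norm_sub_le z (z - ζ)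
            simpa using this
          linarith
        rw [this, mul_zero]
      rw [e1, hJ, ← integral_mul_const]
      refine norm_integral_le_of_norm_le (hI.mul_const K) ?_
      refine Filter.Eventually.of_forall fun ζ => ?_
      rw [norm_mul]
      exact mul_le_mul_of_nonneg_left (hGK _) (norm_nonneg _)
    have hpi : ‖(2 * Real.pi : ℂ)⁻¹‖ ≤ 1 := by
      rw [norm_inv]
      apply inv_le_one_of_one_le₀
      rw [norm_mul, Complex.norm_real, Real.norm_eq_abs, abs_of_pos Real.pi_pos]
      have := Real.pi_gt_three
      simp; linarith
    calc _ ≤ 1 * (J * K) := mul_le_mul hpi hjint (norm_nonneg _) zero_le_one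
      _ ≤ (J + 1) * K := by nlinarith

end LPN
namespace LPN

lemma dbar_mul {u v : ℂ → ℂ} {z : ℂ} (hu : DifferentiableAt ℝ u z) (hv : DifferentiableAt ℝ v z) :
    dbar (fun z => u z * v z) z = dbar u z * v z + u z * dbar v z := by
  unfold dbar
  have := (hu.hasFDerivAt.mul hv.hasFDerivAt).fderiv
  rw [show (fun z => u z * v z) = u * v from rfl, this]
  simp
  ring

lemma dbar_exp_neg {s : ℂ → ℂ} {z : ℂ} (hs : DifferentiableAt ℝ s z) :
    dbar (fun z => Complex.exp (-s z)) z = -(Complex.exp (-s z) * dbar s z) := by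
  unfold dbar
  have : HasFDerivAt (fun x => Complex.exp (-s x)) _ z := (hs.hasFDerivAt.neg).cexp
  rw [this.fderiv]
  simp
  ring

lemma dbar_sub {u v : ℂ → ℂ} {z : ℂ} (hu : DifferentiableAt ℝ u z) (hv : DifferentiableAt ℝ v z) :
    dbar (fun z => u z - v z) z = dbar u z - dbar v z := by
  unfold dbar
  have := (hu.hasFDerivAt.sub hv.hasFDerivAt).fderiv
  rw [show (fun z => u z - v z) = u - v from rfl, this]
  simp
  ring

lemma differentiableAt_of_dbar {u : ℂ → ℂ} {z : ℂ} (hu : DifferentiableAt ℝ u z)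
    (h : dbar u z = 0) : DifferentiableAt ℂ u z := by
  rw [differentiableAt_complex_iff_differentiableAt_real]
  refine ⟨hu, ?_⟩
  unfold dbar at h
  rw [smul_eq_mul]
  linear_combination (-Complex.I) * h + (fderiv ℝ u z Complex.I) * Complex.I_mul_I

lemma similarity : ∃ C0 : ℝ, 0 < C0 ∧ ∀ (f : ℂ → ℂ) (p : ℂ → ℝ) (P : ℝ),
    ContDiffOn ℝ 1 f (Metric.ball 0 (7/5)) → ContDiffOn ℝ 1 p (Metric.ball 0 (7/5)) → 0 ≤ P →
    (∀ z ∈ Metric.ball (0:ℂ) (7/5), |p z| ≤ P) →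
    (∀ z ∈ Metric.ball (0:ℂ) (7/5), dbar f z = p z * (starRingEnd ℂ) (f z)) →
    ∀ η > 0, ∃ s H : ℂ → ℂ, DifferentiableOn ℂ H (Metric.ball 0 (11/10)) ∧
      ∀ z ∈ Metric.ball (0:ℂ) (11/10), ‖s z‖ ≤ C0 * P ∧
        ‖H z - Complex.exp (-s z) * f z‖ ≤ η := by
  obtain ⟨C0, hC0, hT⟩ := cauchyT
  refine ⟨C0, hC0, ?_⟩
  intro f p P hf hp hP hpP hd η hη
  have hQ : 0 ≤ C0 * (Real.exp (C0 * P) * P) := by positivity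
  set κ : ℝ := η / (C0 * (Real.exp (C0 * P) * P) + 1) with hκ
  have hκ0 : 0 < κ := by positivity
  have hκη : C0 * (Real.exp (C0 * P) * P * κ) ≤ η := by
    rw [hκ]
    have : C0 * (Real.exp (C0 * P) * P * (η / (C0 * (Real.exp (C0 * P) * P) + 1)))
      = η * ((C0 * (Real.exp (C0 * P) * P)) / (C0 * (Real.exp (C0 * P) * P) + 1)) := by
      field_simp
    rw [this]
    have h2 : (C0 * (Real.exp (C0 * P) * P)) / (C0 * (Real.exp (C0 * P) * P) + 1) ≤ 1 := by
      rw [div_le_one (by linarith)]; linarith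
    nlinarith
  set D : ℂ → ℂ := fun z => f z * (starRingEnd ℂ) (f z) + (κ ^ 2 : ℝ) with hD
  have hDr : ∀ z, D z = ((‖f z‖ ^ 2 + κ ^ 2 : ℝ) : ℂ) := by
    intro z
    simp only [hD, Complex.mul_conj']
    push_cast; rfl
  have hDn : ∀ z, ‖D z‖ = ‖f z‖ ^ 2 + κ ^ 2 := by
    intro z
    rw [hDr, Complex.norm_real, Real.norm_eq_abs, abs_of_pos (by positivity)]
  have hD0 : ∀ z, D z ≠ 0 := by
    intro z h0
    have := hDn z
    rw [h0, norm_zero] at this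
    have : 0 < ‖f z‖ ^ 2 + κ ^ 2 := by positivity
    linarith
  have hcf : ContDiffOn ℝ 1 (fun z => (starRingEnd ℂ) (f z)) (Metric.ball 0 (7/5)) :=
    (Complex.conjCLE.contDiff).comp_contDiffOn hf
  have hDc : ContDiffOn ℝ 1 D (Metric.ball 0 (7/5)) := (hf.mul hcf).add contDiffOn_const
  have hpc : ContDiffOn ℝ 1 (fun z => (p z : ℂ)) (Metric.ball 0 (7/5)) :=
    (Complex.ofRealCLM.contDiff).comp_contDiffOn hp
  have hDi : ContDiffOn ℝ 1 (fun z => (D z)⁻¹) (Metric.ball 0 (7/5)) := hDc.inv (fun z _ => hD0 z)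
  set g : ℂ → ℂ := fun z => (p z : ℂ) * (starRingEnd ℂ) (f z) ^ 2 / D z with hg
  have hgc : ContDiffOn ℝ 1 g (Metric.ball 0 (7/5)) :=
    ((hpc.mul (hcf.pow 2)).mul hDi).congr (fun z _ => div_eq_mul_inv _ _)
  have hgP : ∀ z ∈ Metric.ball (0:ℂ) (7/5), ‖g z‖ ≤ P := by
    intro z hz
    simp only [hg, norm_div, norm_mul, norm_pow, hDn, Complex.norm_real, Real.norm_eq_abs,
      RCLike.norm_conj]
    rw [div_le_iff₀ (by positivity)]
    have := hpP z hz
    nlinarith [sq_nonneg ‖f z‖, sq_nonneg κ, abs_nonneg (p z)]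
  obtain ⟨s, hs1, hs2, hs3⟩ := hT (6/5) (7/5) (by norm_num) (by norm_num) (by norm_num) g P hgc hP hgP
  have hsub : Metric.ball (0:ℂ) (6/5) ⊆ Metric.ball 0 (7/5) := Metric.ball_subset_ball (by norm_num)
  have hsub' : Metric.ball (0:ℂ) (11/10) ⊆ Metric.ball 0 (6/5) :=
    Metric.ball_subset_ball (by norm_num)
  have hes : ContDiff ℝ 1 (fun z => Complex.exp (-s z)) := hs1.neg.cexp
  set E : ℂ → ℂ := fun z => Complex.exp (-s z) *
    ((p z : ℂ) * (starRingEnd ℂ) (f z) * ((κ ^ 2 : ℝ) : ℂ) / D z) with hE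
  have hEc : ContDiffOn ℝ 1 E (Metric.ball 0 (6/5)) :=
    (hes.contDiffOn.mul (((((hpc.mul hcf).mul contDiffOn_const).mul hDi).congr
      (fun z _ => div_eq_mul_inv _ _)).mono hsub))
  have hEb : ∀ z ∈ Metric.ball (0:ℂ) (6/5), ‖E z‖ ≤ Real.exp (C0 * P) * P * κ := by
    intro z hz
    have h1 : ‖Complex.exp (-s z)‖ ≤ Real.exp (C0 * P) := by
      rw [Complex.norm_exp]
      apply Real.exp_le_exp.mpr
      calc (-s z).re ≤ ‖-s z‖ := Complex.re_le_norm _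
        _ ≤ C0 * P := by rw [norm_neg]; exact hs3 z hz
    have h2 : ‖(p z : ℂ) * (starRingEnd ℂ) (f z) * ((κ ^ 2 : ℝ) : ℂ) / D z‖ ≤ P * κ := by
      simp only [norm_div, norm_mul, hDn, Complex.norm_real, Real.norm_eq_abs,
        RCLike.norm_conj]
      rw [div_le_iff₀ (by positivity), abs_of_pos (by positivity : 0 < κ ^ 2)]
      have h3 := hpP z (hsub hz)
      have h4 : ‖f z‖ * κ ≤ ‖f z‖ ^ 2 + κ ^ 2 := by nlinarith [sq_nonneg (‖f z‖ - κ), norm_nonneg (f z)]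
      calc |p z| * ‖f z‖ * κ ^ 2 = |p z| * κ * (‖f z‖ * κ) := by ring
        _ ≤ P * κ * (‖f z‖ ^ 2 + κ ^ 2) :=
          mul_le_mul (mul_le_mul_of_nonneg_right h3 hκ0.le) h4 (by positivity) (by positivity)
    rw [hE, norm_mul, mul_assoc (Real.exp _)]
    exact mul_le_mul h1 h2 (norm_nonneg _) (Real.exp_pos _).le
  obtain ⟨t, ht1, ht2, ht3⟩ := hT (11/10) (6/5) (by norm_num) (by norm_num) (by norm_num) E _ hEc
    (by positivity) hEb
  refine ⟨s, fun z => Complex.exp (-s z) * f z - t z, ?_, ?_⟩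
  · intro z hz
    have hfz : DifferentiableAt ℝ f z :=
      (hf.contDiffAt (Metric.isOpen_ball.mem_nhds (hsub (hsub' hz)))).differentiableAt one_ne_zero
    have hez : DifferentiableAt ℝ (fun z => Complex.exp (-s z)) z := hes.differentiable one_ne_zero z
    have htz := ht1.differentiable one_ne_zero z
    have hsz := hs1.differentiable one_ne_zero z
    refine (differentiableAt_of_dbar ((hez.mul hfz).sub htz) ?_).differentiableWithinAt
    have e1 := dbar_sub (u := fun z => Complex.exp (-s z) * f z) (hez.mul hfz) htz
    refine e1.trans ?_
    rw [dbar_mul hez hfz, dbar_exp_neg hsz, ht2 z hz, hs2 z (hsub' hz), hd z (hsub (hsub' hz))]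
    simp only [hE, hg]
    have := hD0 z
    field_simp
    simp only [hD]
    ring
  · intro z hz
    refine ⟨hs3 z (hsub' hz), ?_⟩
    have : Complex.exp (-s z) * f z - t z - Complex.exp (-s z) * f z = - t z := by ring
    rw [this, norm_neg]
    exact (ht3 z hz).trans hκη

end LPN
namespace LPN

lemma nodes (ω : Set ℝ) (hω : MeasurableSet ω) (hsub : ω ⊆ Icc (-(1/2) : ℝ) (1/2)) (m : ℝ)
    (hm : 0 < m) (hvol : volume ω = ENNReal.ofReal m) (n : ℕ) :
    ∃ x : ℕ → ℝ, ∀ i ≤ n, x i ∈ ω ∧ ∀ j ≤ n,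
      |(i : ℝ) - j| * (m / (2 * (n + 1))) ≤ |x i - x j| := by
  set F : ℝ → ℝ := fun t => volume.real (ω ∩ Iic t) with hF
  have hfin : volume ω ≠ ⊤ := by rw [hvol]; exact ENNReal.ofReal_ne_top
  have hfin' : ∀ s : Set ℝ, volume (ω ∩ s) ≠ ⊤ := fun s =>
    ne_top_of_le_ne_top hfin (measure_mono inter_subset_left)
  have hsplit : ∀ s t, s ≤ t → F t = F s + volume.real (ω ∩ Ioc s t) := by
    intro s t hst
    simp only [hF]
    rw [← measureReal_union _ (hω.inter measurableSet_Ioc) (hfin' _) (hfin' _), ← inter_union_distrib_left,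
      Iic_union_Ioc_eq_Iic hst]
    rw [disjoint_left]
    rintro y ⟨_, h1⟩ ⟨_, h2⟩
    exact absurd h2.1 (not_lt.mpr h1)
  have hmono : Monotone F := by
    intro s t hst
    rw [hsplit s t hst]
    linarith [measureReal_nonneg (μ := volume) (s := ω ∩ Ioc s t)]
  have hlip1 : ∀ s t, s ≤ t → F t - F s ≤ t - s := by
    intro s t hst
    rw [hsplit s t hst]
    have : volume.real (ω ∩ Ioc s t) ≤ volume.real (Ioc s t) :=
      measureReal_mono inter_subset_right (by simp)
    rw [Real.volume_real_Ioc_of_le hst] at this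
    linarith
  have hlip : ∀ s t, |F s - F t| ≤ |s - t| := by
    intro s t
    rcases le_total s t with h | h
    · rw [abs_sub_comm, abs_sub_comm s, abs_of_nonneg (sub_nonneg.mpr (hmono h)),
        abs_of_nonneg (sub_nonneg.mpr h)]
      exact hlip1 s t h
    · rw [abs_of_nonneg (sub_nonneg.mpr (hmono h)), abs_of_nonneg (sub_nonneg.mpr h)]
      exact hlip1 t s h
  have hcont : Continuous F := by
    have : LipschitzWith 1 F := LipschitzWith.of_dist_le_mul (by
      intro s t; simpa [Real.dist_eq] using hlip s t)
    exact this.continuous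
  have hF0 : F (-1) = 0 := by
    simp only [hF]
    have : ω ∩ Iic (-1 : ℝ) = ∅ := by
      ext y
      simp only [mem_inter_iff, mem_Iic, mem_empty_iff_false, iff_false, not_and, not_le]
      intro hy
      have := (hsub hy).1
      linarith
    rw [this]; simp
  have hF1 : F 1 = m := by
    simp only [hF]
    have : ω ∩ Iic (1 : ℝ) = ω := by
      apply inter_eq_left.mpr
      intro y hy
      have := (hsub hy).2
      simp only [mem_Iic]; linarith
    rw [this, measureReal_def, hvol, ENNReal.toReal_ofReal hm.le]
  have hivt : ∀ c, 0 ≤ c → c ≤ m → ∃ a, F a = c := by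
    intro c h0 h1
    have := intermediate_value_Icc (by norm_num : (-1:ℝ) ≤ 1) hcont.continuousOn
    rw [hF0, hF1] at this
    obtain ⟨a, _, ha⟩ := this ⟨h0, h1⟩
    exact ⟨a, ha⟩
  set h : ℝ := m / (2 * (n + 1)) with hh
  have hh0 : 0 < h := by positivity
  have hhm : h * (2 * (n + 1)) = m := by rw [hh]; field_simp
  have hex : ∀ i : ℕ, ∃ x, i ≤ n → x ∈ ω ∧ 2 * i * h ≤ F x ∧ F x ≤ (2 * i + 1) * h := by
    intro i
    by_cases hi : i ≤ n
    swap
    · exact ⟨0, fun h => absurd h hi⟩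
    have hi' : (i : ℝ) ≤ n := by exact_mod_cast hi
    obtain ⟨a, ha⟩ := hivt (2 * i * h) (by positivity) (by nlinarith)
    obtain ⟨b, hb⟩ := hivt ((2 * i + 1) * h) (by positivity) (by nlinarith)
    have hab : a ≤ b := by
      by_contra hlt
      have := hmono (not_le.mp hlt).le
      rw [ha, hb] at this
      nlinarith
    have hpos : volume.real (ω ∩ Ioc a b) = h := by
      have := hsplit a b hab
      rw [ha, hb] at this
      linarith
    have hne : (ω ∩ Ioc a b).Nonempty := by
      by_contra hemp
      rw [not_nonempty_iff_eq_empty] at hemp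
      rw [hemp] at hpos
      simp at hpos
      linarith
    obtain ⟨x, hx, hx1, hx2⟩ := hne
    exact ⟨x, fun _ => ⟨hx, ha ▸ hmono hx1.le, hb ▸ hmono hx2⟩⟩
  choose x hx using hex
  have hlt : ∀ i j : ℕ, i < j → j ≤ n → |(i : ℝ) - j| * h ≤ |x i - x j| := by
    intro i j hij hj
    have h1 := hx i (by omega)
    have h2 := hx j hj
    have hij' : (i : ℝ) + 1 ≤ j := by exact_mod_cast hij
    have h3 := hlip (x i) (x j)
    have h4 : F (x j) - F (x i) ≤ |F (x i) - F (x j)| := by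
      rw [abs_sub_comm]; exact le_abs_self _
    rw [abs_sub_comm, abs_of_nonneg (by linarith : (0:ℝ) ≤ j - i)]
    nlinarith
  refine ⟨x, fun i hi => ⟨(hx i hi).1, fun j hj => ?_⟩⟩
  rcases lt_trichotomy i j with hij | hij | hij
  · exact hlt i j hij hj
  · subst hij; simp
  · rw [abs_sub_comm, abs_sub_comm (x i)]
    exact hlt j i hij hi

lemma prod_fact (i n : ℕ) (hi : i ≤ n) :
    ∏ j ∈ (Finset.range (n + 1)).erase i, |(i : ℝ) - j| = (i.factorial : ℝ) * (n - i).factorial := by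
  induction n, hi using Nat.le_induction with
  | base =>
    have : (Finset.range (i + 1)).erase i = Finset.range i := by
      rw [Finset.range_add_one, Finset.erase_insert (by simp)]
    rw [this]
    simp only [Nat.sub_self, Nat.factorial_zero, Nat.cast_one, mul_one]
    rw [← Finset.prod_range_add_one_eq_factorial, ← Finset.prod_range_reflect]
    push_cast
    refine Finset.prod_congr rfl ?_
    intro j hj
    have hj' : j < i := Finset.mem_range.mp hj
    have : ((i - 1 - j : ℕ) : ℝ) = (i : ℝ) - 1 - j := by
      rw [Nat.cast_sub (by omega), Nat.cast_sub (by omega)]; simp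
    rw [this, abs_of_nonneg]
    · ring
    · have : (j : ℝ) < i := by exact_mod_cast hj'
      linarith
  | succ n hn ih =>
    have : (Finset.range (n + 1 + 1)).erase i = insert (n + 1) ((Finset.range (n + 1)).erase i) := by
      rw [Finset.range_add_one (n := n + 1), Finset.erase_insert_of_ne (by omega)]
    rw [this, Finset.prod_insert (by simp), ih]
    have h2 : n + 1 - i = (n - i) + 1 := by omega
    rw [h2, Nat.factorial_succ]
    push_cast
    have : ((n - i : ℕ) : ℝ) = (n : ℝ) - i := by rw [Nat.cast_sub hn]
    rw [this]
    have h3 : (i : ℝ) ≤ n := by exact_mod_cast hn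
    rw [abs_sub_comm, abs_of_nonneg (by linarith)]
    ring

lemma blaschke (S : Finset ℝ) (hS : ∀ x ∈ S, |x| ≤ 1/2) :
    ∀ (G : ℂ → ℂ) (B : ℝ), DifferentiableOn ℂ G (Metric.ball 0 (11/10)) →
    (∀ x ∈ S, G x = 0) → (∀ z : ℂ, ‖z‖ = 1 → ‖G z‖ ≤ B) →
    ∀ z : ℂ, ‖z‖ ≤ 1 → ‖G z‖ * ∏ x ∈ S, ‖1 - x * z‖ ≤ B * ∏ x ∈ S, ‖z - x‖ := by
  induction S using Finset.induction_on with
  | empty =>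
    intro G B hG _ hB z hz
    simp only [Finset.prod_empty, mul_one]
    have hd : DiffContOnCl ℂ G (Metric.ball 0 1) := by
      refine DifferentiableOn.diffContOnCl ?_
      refine hG.mono ?_
      rw [closure_ball (0:ℂ) one_ne_zero]
      exact Metric.closedBall_subset_ball (by norm_num)
    refine Complex.norm_le_of_forall_mem_frontier_norm_le Metric.isBounded_ball hd ?_ ?_
    · intro w hw
      rw [frontier_ball (0:ℂ) one_ne_zero] at hw
      exact hB w (by simpa using hw)
    · rw [closure_ball (0:ℂ) one_ne_zero]
      simpa using hz
  | insert x0 S hx0 ih =>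
    intro G B hG h0 hB z hz
    have hS' : ∀ x ∈ S, |x| ≤ 1/2 := fun x hx => hS x (Finset.mem_insert_of_mem hx)
    have hxx : |x0| ≤ 1/2 := hS x0 (Finset.mem_insert_self _ _)
    have hG0 : G x0 = 0 := h0 x0 (Finset.mem_insert_self _ _)
    have hmem : (x0 : ℂ) ∈ Metric.ball (0:ℂ) (11/10) := by
      rw [mem_ball_zero_iff, Complex.norm_real, Real.norm_eq_abs]; linarith
    have hfac : ∀ w, G w = (w - x0) * dslope G x0 w := by
      intro w
      have := sub_smul_dslope G (x0 : ℂ) w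
      rw [smul_eq_mul, hG0, sub_zero] at this
      exact this.symm
    have hds : DifferentiableOn ℂ (dslope G x0) (Metric.ball 0 (11/10)) :=
      (Complex.differentiableOn_dslope (Metric.isOpen_ball.mem_nhds hmem)).mpr hG
    have hn : ∀ w : ℂ, ‖w‖ = 1 → ‖1 - (x0:ℂ) * w‖ = ‖w - x0‖ := by
      intro w hw
      have h1 : (1 - (x0:ℂ) * w) = w * (starRingEnd ℂ) (w - x0) := by
        rw [map_sub, mul_sub, Complex.mul_conj', hw, Complex.conj_ofReal]
        push_cast; ring
      rw [h1, norm_mul, hw, one_mul, RCLike.norm_conj]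
    have := ih hS' (fun w => dslope G x0 w * (1 - x0 * w)) B
      (hds.mul (by fun_prop)) ?_ ?_ z hz
    · rw [Finset.prod_insert hx0, Finset.prod_insert hx0, hfac z, norm_mul]
      rw [norm_mul] at this
      have h3 := mul_le_mul_of_nonneg_left this (norm_nonneg (z - x0))
      calc _ = ‖z - ↑x0‖ * (‖dslope G (↑x0) z‖ * ‖1 - ↑x0 * z‖ * ∏ x ∈ S, ‖1 - ↑x * z‖) := by ring
        _ ≤ _ := h3
        _ = _ := by ring
    · intro x hx
      have hne : (x : ℂ) - x0 ≠ 0 := by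
        rw [sub_ne_zero]
        intro h
        apply hx0
        have : x = x0 := by exact_mod_cast h
        rwa [← this]
      have h4 := hfac x
      rw [h0 x (Finset.mem_insert_of_mem hx)] at h4
      have := (mul_eq_zero.mp h4.symm).resolve_left hne
      simp [this]
    · intro w hw
      rw [norm_mul, hn w hw, mul_comm, ← norm_mul, ← hfac]
      exact hB w hw

lemma blaschke_ratio (x : ℝ) (hx : |x| ≤ 1/2) (z : ℂ) (hz : ‖z‖ ^ 2 ≤ 1/2) :
    ‖z - x‖ ≤ 24/25 * ‖1 - x * z‖ := by
  apply (pow_le_pow_iff_left₀ (norm_nonneg _) (by positivity) two_ne_zero).mp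
  rw [mul_pow, ← Complex.normSq_eq_norm_sq, ← Complex.normSq_eq_norm_sq]
  rw [← Complex.normSq_eq_norm_sq] at hz
  simp only [Complex.normSq_apply] at hz ⊢
  simp
  obtain ⟨a, b⟩ := z
  simp at hz ⊢
  have hx2 : x ^ 2 ≤ 1/4 := by rw [← sq_abs]; nlinarith [abs_nonneg x]
  have hz' : a * a + b * b ≤ 1/2 := by norm_num at hz ⊢; exact hz
  have ha2 : a ^ 2 ≤ 1 ^ 2 := by nlinarith [mul_self_nonneg b]
  have hax : |a| ≤ 1 := abs_le_of_sq_le_sq ha2 (by norm_num)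
  have h5 : -(1/2) ≤ x * a := by
    have := abs_mul x a
    have h2 : |x * a| ≤ 1/2 := by rw [this]; nlinarith [abs_nonneg x, abs_nonneg a]
    linarith [neg_abs_le (x * a)]
  have h6 : x ^ 2 * (a * a + b * b) ≤ 1/8 := by
    nlinarith [sq_nonneg x, mul_self_nonneg a, mul_self_nonneg b]
  nlinarith [mul_nonneg (sub_nonneg.mpr hx2) (sub_nonneg.mpr hz')]

end LPN
namespace LPN

lemma holo_est (ω : Set ℝ) (hω : MeasurableSet ω) (hsub : ω ⊆ Icc (-(1/2) : ℝ) (1/2)) (m : ℝ)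
    (hm : 0 < m) (hvol : volume ω = ENNReal.ofReal m) (n : ℕ) (H : ℂ → ℂ) (δ B : ℝ)
    (hH : DifferentiableOn ℂ H (Metric.ball 0 (11/10))) (hδ0 : 0 ≤ δ)
    (hδ : ∀ x ∈ ω, ‖H (x : ℝ)‖ ≤ δ) (hB : ∀ z : ℂ, ‖z‖ ≤ 1 → ‖H z‖ ≤ B)
    (z : ℂ) (hz : ‖z‖ ^ 2 ≤ 1/2) :
    ‖H z‖ ≤ 2 * Real.exp 1 * (16 * Real.exp 1 / m) ^ n * δ + (24/25) ^ n * B := by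
  obtain ⟨x, hx⟩ := nodes ω hω hsub m hm hvol n
  set h : ℝ := m / (2 * (n + 1)) with hh
  have hh0 : 0 < h := by positivity
  have hxne : ∀ i ≤ n, ∀ j ≤ n, j ≠ i → (x i : ℂ) - x j ≠ 0 := by
    intro i hi j hj hij h0
    have h1 := (hx i hi).2 j hj
    have h2 : x i - x j = 0 := by exact_mod_cast h0
    rw [h2, abs_zero] at h1
    have h3 : (0:ℝ) < |(i:ℝ) - j| := by
      rw [abs_pos, sub_ne_zero]
      intro h7; exact hij (by exact_mod_cast h7.symm)
    nlinarith
  have hxabs : ∀ i ≤ n, |x i| ≤ 1/2 := by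
    intro i hi
    rw [abs_le]
    exact hsub (hx i hi).1
  set l : ℕ → ℂ → ℂ := fun i w =>
    ∏ j ∈ (Finset.range (n + 1)).erase i, (w - x j) / ((x i : ℂ) - x j) with hl
  have hln : ∀ i ≤ n, ∀ w : ℂ, ‖w‖ ≤ 1 → ‖l i w‖ ≤ (8 / m) ^ n * Real.exp (n + 1) := by
    intro i hi w hw
    have e1 : ‖l i w‖ ≤ ∏ j ∈ (Finset.range (n + 1)).erase i, ((2 / h) * |(i:ℝ) - j|⁻¹) := by
      simp only [hl, norm_prod]
      refine Finset.prod_le_prod (fun _ _ => norm_nonneg _) ?_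
      intro j hj
      rw [Finset.mem_erase, Finset.mem_range] at hj
      have hj' : j ≤ n := by omega
      have h3 : (0:ℝ) < |(i:ℝ) - j| := by
        rw [abs_pos, sub_ne_zero]
        intro h7; exact hj.1 (by exact_mod_cast h7.symm)
      have h4 : ‖w - x j‖ ≤ 2 := by
        calc ‖w - x j‖ ≤ ‖w‖ + ‖(x j : ℂ)‖ := norm_sub_le _ _
          _ ≤ 2 := by
            rw [Complex.norm_real, Real.norm_eq_abs]
            linarith [hxabs j hj']
      have h5 : |(i:ℝ) - j| * h ≤ ‖(x i : ℂ) - x j‖ := by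
        rw [← Complex.ofReal_sub, Complex.norm_real, Real.norm_eq_abs]
        exact (hx i hi).2 j hj'
      rw [norm_div]
      calc ‖w - x j‖ / ‖(x i : ℂ) - x j‖ ≤ 2 / (|(i:ℝ) - j| * h) :=
            div_le_div₀ (by norm_num) h4 (by positivity) h5
        _ = _ := by field_simp
    have hcard : ((Finset.range (n + 1)).erase i).card = n := by
      rw [Finset.card_erase_of_mem (Finset.mem_range.mpr (by omega))]; simp
    rw [Finset.prod_mul_distrib, Finset.prod_const, hcard, Finset.prod_inv_distrib,
      prod_fact i n hi] at e1
    refine e1.trans ?_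
    have hfac : ((i.factorial : ℝ) * (n - i).factorial)⁻¹ ≤ 2 ^ n / n.factorial := by
      have hc : (n.choose i : ℝ) * i.factorial * (n - i).factorial = n.factorial := by
        exact_mod_cast Nat.choose_mul_factorial_mul_factorial hi
      have hc2 : (n.choose i : ℝ) ≤ 2 ^ n := by exact_mod_cast Nat.choose_le_two_pow n i
      have p1 : (0:ℝ) < i.factorial := by exact_mod_cast Nat.factorial_pos _
      have p2 : (0:ℝ) < (n - i).factorial := by exact_mod_cast Nat.factorial_pos _
      have p3 : (0:ℝ) < n.factorial := by exact_mod_cast Nat.factorial_pos _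
      rw [inv_eq_one_div, div_le_div_iff₀ (by positivity) p3, one_mul, ← hc, mul_assoc]
      exact mul_le_mul_of_nonneg_right hc2 (by positivity)
    calc (2 / h) ^ n * ((i.factorial : ℝ) * (n - i).factorial)⁻¹
        ≤ (2 / h) ^ n * (2 ^ n / n.factorial) := mul_le_mul_of_nonneg_left hfac (by positivity)
      _ = (8 / m) ^ n * (((n : ℝ) + 1) ^ n / n.factorial) := by
          rw [← mul_div_assoc, ← mul_div_assoc, ← mul_pow, ← mul_pow, hh]
          congr 2
          field_simp
          norm_num
      _ ≤ _ := mul_le_mul_of_nonneg_left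
          (Real.pow_div_factorial_le_exp _ (by positivity) n) (by positivity)
  set L : ℂ → ℂ := fun w => ∑ i ∈ Finset.range (n + 1), H (x i) * l i w with hL
  set Λ : ℝ := Real.exp 1 * (16 * Real.exp 1 / m) ^ n with hΛ
  have hΛ0 : 0 ≤ Λ := by positivity
  have hLb : ∀ w : ℂ, ‖w‖ ≤ 1 → ‖L w‖ ≤ Λ * δ := by
    intro w hw
    have e2 : ‖L w‖ ≤ ∑ i ∈ Finset.range (n + 1), δ * ((8 / m) ^ n * Real.exp (n + 1)) := by
      refine norm_sum_le_of_le _ ?_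
      intro i hi
      have hi' : i ≤ n := by rw [Finset.mem_range] at hi; omega
      rw [norm_mul]
      exact mul_le_mul (hδ _ (hx i hi').1) (hln i hi' w hw) (norm_nonneg _) hδ0
    refine e2.trans ?_
    rw [Finset.sum_const, Finset.card_range, nsmul_eq_mul, hΛ]
    have e3 : ((n + 1 : ℕ) : ℝ) ≤ 2 ^ n := by
      exact_mod_cast Nat.succ_le_of_lt n.lt_two_pow_self
    have e4 : Real.exp ((n:ℝ) + 1) = Real.exp 1 ^ n * Real.exp 1 := by
      rw [Real.exp_add, ← Real.exp_nat_mul, mul_one]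
    rw [e4]
    calc _ ≤ 2 ^ n * (δ * ((8 / m) ^ n * (Real.exp 1 ^ n * Real.exp 1))) :=
          mul_le_mul_of_nonneg_right e3 (by positivity)
      _ = Real.exp 1 * (2 ^ n * ((8 / m) ^ n * Real.exp 1 ^ n)) * δ := by ring
      _ = _ := by
        rw [← mul_pow, ← mul_pow]
        congr 3
        ring
  have hLn : ∀ k ≤ n, L (x k) = H (x k) := by
    intro k hk
    simp only [hL]
    rw [Finset.sum_eq_single k]
    · simp only [hl]
      rw [Finset.prod_eq_one, mul_one]
      intro j hj
      rw [Finset.mem_erase, Finset.mem_range] at hj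
      exact div_self (hxne k hk j (by omega) hj.1)
    · intro i _ hik
      simp only [hl]
      rw [Finset.prod_eq_zero (i := k), mul_zero]
      · rw [Finset.mem_erase, Finset.mem_range]
        exact ⟨fun h => hik h.symm, by omega⟩
      · simp
    · intro hk'
      exact absurd (Finset.mem_range.mpr (by omega)) hk'
  have hLd : Differentiable ℂ L := by
    simp only [hL, hl]
    fun_prop
  have hinj : Set.InjOn x (Finset.range (n + 1)) := by
    intro i hi j hj hij
    simp only [Finset.coe_range, mem_Iio] at hi hj
    by_contra hne
    exact hxne i (by omega) j (by omega) (fun h => hne h.symm) (by rw [hij, sub_self])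
  set S := (Finset.range (n + 1)).image x with hS
  have hcardS : S.card = n + 1 := by
    rw [hS, Finset.card_image_of_injOn hinj, Finset.card_range]
  have hSmem : ∀ y ∈ S, ∃ i ≤ n, x i = y := by
    intro y hy
    obtain ⟨i, hi, rfl⟩ := Finset.mem_image.mp hy
    exact ⟨i, by rw [Finset.mem_range] at hi; omega, rfl⟩
  have hSabs : ∀ y ∈ S, |y| ≤ 1/2 := by
    intro y hy
    obtain ⟨i, hi, rfl⟩ := hSmem y hy
    exact hxabs i hi
  have hz1 : ‖z‖ ≤ 1 := by nlinarith [norm_nonneg z]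
  have hbl := blaschke S hSabs (fun w => H w - L w) (B + Λ * δ) (hH.sub hLd.differentiableOn)
    (by
      intro y hy
      obtain ⟨i, hi, rfl⟩ := hSmem y hy
      rw [hLn i hi, sub_self])
    (by
      intro w hw
      refine (norm_sub_le _ _).trans (add_le_add (hB w hw.le) (hLb w hw.le)))
    z hz1
  have hB0 : 0 ≤ B := (norm_nonneg _).trans (hB 0 (by simp))
  have hprod : ∏ y ∈ S, ‖z - y‖ ≤ (24/25) ^ (n + 1) * ∏ y ∈ S, ‖1 - y * z‖ := by
    rw [← hcardS, ← Finset.prod_const, ← Finset.prod_mul_distrib]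
    exact Finset.prod_le_prod (fun _ _ => norm_nonneg _)
      (fun y hy => blaschke_ratio y (hSabs y hy) z hz)
  have hpos : 0 < ∏ y ∈ S, ‖1 - y * z‖ := by
    refine Finset.prod_pos ?_
    intro y hy
    rw [norm_pos_iff, sub_ne_zero]
    intro h1
    have h2 : ‖(y:ℂ) * z‖ = 1 := by rw [← h1, norm_one]
    rw [norm_mul, Complex.norm_real, Real.norm_eq_abs] at h2
    nlinarith [hSabs y hy, norm_nonneg z, abs_nonneg y]
  have hdiff : ‖H z - L z‖ ≤ (B + Λ * δ) * (24/25) ^ (n + 1) := by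
    have : ‖H z - L z‖ * ∏ y ∈ S, ‖1 - y * z‖
        ≤ ((B + Λ * δ) * (24/25) ^ (n + 1)) * ∏ y ∈ S, ‖1 - y * z‖ := by
      refine hbl.trans ?_
      rw [mul_assoc (B + Λ * δ)]
      exact mul_le_mul_of_nonneg_left hprod (by positivity)
    exact le_of_mul_le_mul_right this hpos
  have hfin : ‖H z‖ ≤ ‖H z - L z‖ + ‖L z‖ := by
    have := norm_add_le (H z - L z) (L z)
    simpa using this
  have hq1 : ((24:ℝ)/25) ^ (n + 1) ≤ 1 := pow_le_one₀ (by norm_num) (by norm_num)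
  have hq2 : ((24:ℝ)/25) ^ (n + 1) ≤ (24/25) ^ n :=
    pow_le_pow_of_le_one (by norm_num) (by norm_num) (by omega)
  have hLz := hLb z hz1
  have hΛδ : 0 ≤ Λ * δ := by positivity
  have : 2 * Real.exp 1 * (16 * Real.exp 1 / m) ^ n * δ = 2 * (Λ * δ) := by rw [hΛ]; ring
  rw [this]
  nlinarith

end LPN
namespace LPN

lemma riccati (V : ℝ → ℝ) (hV : Continuous V) (M : ℝ) (hM : ∀ x, |V x| ≤ M)
    (hV1 : ∀ x, 1 ≤ V x) :
    ∃ p : ℝ → ℝ, ∀ t ∈ Ioo (-(3/2) : ℝ) (3/2), HasDerivAt p (V t - p t ^ 2) t ∧ |p t| ≤ M + 1 := by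
  have hM1 : 1 ≤ M := (hV1 0).trans ((le_abs_self _).trans (hM 0))
  set A : ℝ := M + 1 with hA
  have hA0 : 0 ≤ A := by linarith
  set c : ℝ → ℝ := fun x => max 0 (min x A) with hc
  have hc0 : ∀ x, 0 ≤ c x := fun x => le_max_left _ _
  have hcA : ∀ x, c x ≤ A := fun x => max_le hA0 (min_le_right _ _)
  have hclip : ∀ x y, |c x - c y| ≤ |x - y| := by
    intro x y
    refine (abs_max_sub_max_le_max _ _ _ _).trans ?_
    rw [sub_self, abs_zero]
    refine max_le (abs_nonneg _) ?_
    refine (abs_min_sub_min_le_max _ _ _ _).trans ?_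
    rw [sub_self, abs_zero]
    exact max_le le_rfl (abs_nonneg _)
  set f : ℝ → ℝ → ℝ := fun t x => V t - c x ^ 2 with hf
  have hle : (-(3/2):ℝ) ≤ 3/2 := by norm_num
  have hL0 : 0 ≤ M + A ^ 2 := by positivity
  have hPL : IsPicardLindelof f (tmin := -(3/2)) (tmax := 3/2) ⟨-(3/2), left_mem_Icc.mpr hle⟩ (0:ℝ)
      (Real.toNNReal (3 * (M + A ^ 2))) 0 (Real.toNNReal (M + A ^ 2))
      (Real.toNNReal (2 * A)) := by
    refine ⟨?_, ?_, ?_, ?_⟩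
    · intro t _
      apply LipschitzOnWith.of_dist_le_mul
      intro x _ y _
      simp only [hf, Real.dist_eq]
      rw [Real.coe_toNNReal _ (by positivity)]
      have : V t - c x ^ 2 - (V t - c y ^ 2) = (c x + c y) * (c y - c x) := by ring
      rw [this, abs_mul, abs_of_nonneg (add_nonneg (hc0 x) (hc0 y)), abs_sub_comm (c y)]
      exact mul_le_mul (by linarith [hcA x, hcA y]) (hclip x y) (abs_nonneg _) (by positivity)
    · intro x _
      simp only [hf]
      fun_prop
    · intro t _ x _
      simp only [hf, Real.norm_eq_abs]
      rw [Real.coe_toNNReal _ (by positivity)]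
      have h1 := abs_sub (V t) (c x ^ 2)
      have h2 : |c x ^ 2| ≤ A ^ 2 := by
        rw [abs_of_nonneg (by positivity)]
        exact pow_le_pow_left₀ (hc0 x) (hcA x) 2
      linarith [hM t]
    · rw [Real.coe_toNNReal _ (by positivity), Real.coe_toNNReal _ (by positivity)]
      norm_num
      linarith
  obtain ⟨p, hp0, hp⟩ := hPL.exists_eq_forall_mem_Icc_hasDerivWithinAt₀
  simp only at hp0
  have hpc : ContinuousOn p (Icc (-(3/2)) (3/2)) := fun t ht => (hp t ht).continuousWithinAt
  have hpr : ∀ x ∈ Ico (-(3/2):ℝ) (3/2), HasDerivWithinAt p (f x (p x)) (Ici x) x := by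
    intro x hx
    have := (hp x ⟨hx.1, hx.2.le⟩)
    have h2 : HasDerivWithinAt p (f x (p x)) (Icc x (3/2)) x := this.mono (Icc_subset_Icc_left hx.1)
    exact h2.mono_of_mem_nhdsWithin (Icc_mem_nhdsGE hx.2)
  have hpos : ∀ ⦃x⦄, x ∈ Icc (-(3/2):ℝ) (3/2) → -p x ≤ 0 := by
    refine image_le_of_deriv_right_lt_deriv_boundary (f := fun x => -p x) hpc.neg
      (fun x hx => (hpr x hx).neg) (B := fun _ => 0) (B' := fun _ => 0) ?_ ?_ ?_
    · simp [hp0]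
    · intro x; exact hasDerivAt_const _ _
    · intro x _ hx
      have : p x = 0 := by linarith
      simp only [hf, this, hc]
      rw [min_eq_left hA0, max_self]
      linarith [hV1 x]
  have hup : ∀ ⦃x⦄, x ∈ Icc (-(3/2):ℝ) (3/2) → p x ≤ A := by
    refine image_le_of_deriv_right_lt_deriv_boundary hpc
      hpr (B := fun _ => A) (B' := fun _ => 0) ?_ ?_ ?_
    · simp [hp0, hA0]
    · intro x; exact hasDerivAt_const _ _
    · intro x _ hx
      simp only [hf, hx, hc]
      rw [min_self, max_eq_right hA0]
      have := (le_abs_self _).trans (hM x)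
      nlinarith
  refine ⟨p, fun t ht => ?_⟩
  have ht' : t ∈ Icc (-(3/2):ℝ) (3/2) := ⟨ht.1.le, ht.2.le⟩
  have h0 := hpos ht'
  have h1 := hup ht'
  constructor
  · have := (hp t ht').hasDerivAt (Icc_mem_nhds ht.1 ht.2)
    simp only [hf, hc] at this
    rwa [min_eq_left h1, max_eq_right (by linarith)] at this
  · rw [abs_of_nonneg (by linarith)]; exact h1

end LPN
namespace LPN

lemma deriv2_nonpos (h : ℝ → ℝ) (a : ℝ) (hm : IsLocalMax h a) (hc : ContinuousAt h a) :
    deriv (deriv h) a ≤ 0 := by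
  by_contra hpos
  push Not at hpos
  have hmin : IsLocalMin h a := isLocalMin_of_deriv_deriv_pos hpos hm.deriv_eq_zero hc
  have heq : h =ᶠ[nhds a] fun _ => h a := by
    filter_upwards [hm, hmin] with x h1 h2
    exact le_antisymm h1 h2
  have h1 := heq.deriv.deriv_eq
  simp at h1
  linarith

lemma c2_hasDeriv (u : ℝ → ℝ) (hu : ContDiff ℝ 2 u) :
    (∀ x, HasDerivAt u (deriv u x) x) ∧ (∀ x, HasDerivAt (deriv u) (deriv (deriv u) x) x) := by
  constructor
  · intro x
    exact (hu.differentiable (by norm_num) x).hasDerivAt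
  · intro x
    have : ContDiff ℝ 1 (deriv u) := by
      have h2 : ContDiff ℝ (1 + 1) u := by simpa [one_add_one_eq_two] using hu
      exact (contDiff_succ_iff_deriv.mp h2).2.2
    exact (this.differentiable (by norm_num) x).hasDerivAt

lemma sym_deriv1 (u : ℝ → ℝ) (hu : ContDiff ℝ 2 u) (x0 a b c s : ℝ) :
    HasDerivAt (fun s => (u (x0 + s) - u (x0 - s)) / 2 - (a + b * s - c * s ^ 2))
      ((deriv u (x0 + s) + deriv u (x0 - s)) / 2 - (b - c * (2 * s))) s := by
  obtain ⟨h1, _⟩ := c2_hasDeriv u hu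
  have e1 := (h1 (x0 + s)).comp_const_add x0 s
  have e2 := (h1 (x0 - s)).comp_const_sub x0 s
  have e3 : HasDerivAt (fun s : ℝ => a + b * s - c * s ^ 2) (b - c * (2 * s)) s := by
    have := (((hasDerivAt_id s).const_mul b).const_add a).sub ((hasDerivAt_pow 2 s).const_mul c)
    exact this.congr_deriv (by simp)
  exact (((e1.sub e2).div_const 2).sub e3).congr_deriv (by ring)

lemma sym_deriv2 (u : ℝ → ℝ) (hu : ContDiff ℝ 2 u) (x0 a b c s : ℝ) :
    deriv (deriv (fun s => (u (x0 + s) - u (x0 - s)) / 2 - (a + b * s - c * s ^ 2))) s =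
      (deriv (deriv u) (x0 + s) - deriv (deriv u) (x0 - s)) / 2 + 2 * c := by
  obtain ⟨_, h2⟩ := c2_hasDeriv u hu
  have : deriv (fun s => (u (x0 + s) - u (x0 - s)) / 2 - (a + b * s - c * s ^ 2)) =
      fun s => (deriv u (x0 + s) + deriv u (x0 - s)) / 2 - (b - c * (2 * s)) :=
    funext fun s => (sym_deriv1 u hu x0 a b c s).deriv
  rw [this]
  have e1 := (h2 (x0 + s)).comp_const_add x0 s
  have e2 := (h2 (x0 - s)).comp_const_sub x0 s
  have e3 : HasDerivAt (fun s : ℝ => b - c * (2 * s)) (-(c * 2)) s := by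
    have := (((hasDerivAt_id s).const_mul 2).const_mul c).const_sub b
    exact this.congr_deriv (by simp)
  exact ((((e1.add e2).div_const 2).sub e3).congr_deriv (by ring)).deriv

lemma par_deriv2 (v w : ℝ → ℝ) (hv : ContDiff ℝ 2 v) (hw : ContDiff ℝ 2 w) (t0 a b y : ℝ) :
    deriv (deriv (fun y => (v (t0 + y) - w (t0 + y)) / 2 - (a + b * y ^ 2))) y =
      (deriv (deriv v) (t0 + y) - deriv (deriv w) (t0 + y)) / 2 - 2 * b := by
  obtain ⟨v1, v2⟩ := c2_hasDeriv v hv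
  obtain ⟨w1, w2⟩ := c2_hasDeriv w hw
  have : deriv (fun y => (v (t0 + y) - w (t0 + y)) / 2 - (a + b * y ^ 2)) =
      fun y => (deriv v (t0 + y) - deriv w (t0 + y)) / 2 - b * (2 * y) := by
    funext y
    have e1 := (v1 (t0 + y)).comp_const_add t0 y
    have e2 := (w1 (t0 + y)).comp_const_add t0 y
    have e3 : HasDerivAt (fun s : ℝ => a + b * s ^ 2) (b * (2 * y)) y := by
      have := ((hasDerivAt_pow 2 y).const_mul b).const_add a
      exact this.congr_deriv (by simp)
    exact (((e1.sub e2).div_const 2).sub e3).deriv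
  rw [this]
  have e1 := (v2 (t0 + y)).comp_const_add t0 y
  have e2 := (w2 (t0 + y)).comp_const_add t0 y
  have e3 : HasDerivAt (fun s : ℝ => b * (2 * s)) (b * 2) y := by
    have := ((hasDerivAt_id y).const_mul 2).const_mul b
    exact this.congr_deriv (by simp)
  exact ((((e1.sub e2).div_const 2).sub e3).congr_deriv (by ring)).deriv

lemma grad_upper (φ : ℝ × ℝ → ℝ) (hφ : ContDiff ℝ 2 φ) (x0 t0 B N : ℝ) (hB : 0 ≤ B)
    (hφB : ∀ x y, |x - x0| ≤ 1/2 → |y - t0| ≤ 1/2 → |φ (x, y)| ≤ B)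
    (hN : ∀ x y, |x - x0| ≤ 1/2 → |y - t0| ≤ 1/2 →
      |deriv (deriv fun s => φ (s, y)) x + deriv (deriv fun s => φ (x, s)) y| ≤ N) :
    deriv (fun s => φ (s, t0)) x0 ≤ 4 * B + N / 4 := by
  have hN0 : 0 ≤ N := (abs_nonneg _).trans (hN x0 t0 (by norm_num) (by norm_num))
  have hux : ∀ y, ContDiff ℝ 2 (fun s => φ (s, y)) := fun y => by fun_prop
  have huy : ∀ x, ContDiff ℝ 2 (fun s => φ (x, s)) := fun x => by fun_prop
  apply le_of_forall_pos_le_add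
  intro ε0 hε0
  set ε := 4 * ε0 with hε'
  have hε : 0 < ε := by positivity
  set c : ℝ := 4 * B + (N + ε) / 2 with hc
  set b : ℝ := 4 * B + (N + ε) / 4 with hb
  set k : ℝ × ℝ → ℝ := fun z => (φ (x0 + z.1, t0 + z.2) - φ (x0 - z.1, t0 + z.2)) / 2
    - (4 * B * z.2 ^ 2 + b * z.1 - c * z.1 ^ 2) with hk
  have hkc : Continuous k := by
    have := hφ.continuous
    simp only [hk]; fun_prop
  set R : Set (ℝ × ℝ) := Icc (0:ℝ) (1/2) ×ˢ Icc (-(1/2) : ℝ) (1/2) with hR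
  have hRc : IsCompact R := isCompact_Icc.prod isCompact_Icc
  have hRne : R.Nonempty := ⟨(0,0), by simp [hR]⟩
  obtain ⟨⟨s, y⟩, hmem, hmax⟩ := hRc.exists_isMaxOn hRne hkc.continuousOn
  have hmem' := hmem
  simp only [hR, mem_prod, mem_Icc] at hmem'
  obtain ⟨⟨hs0, hs1⟩, hy0, hy1⟩ := hmem'
  have hup : (φ (x0 + s, t0 + y) - φ (x0 - s, t0 + y)) / 2 ≤ B := by
    have h1 := hφB (x0 + s) (t0 + y) (by rw [abs_le]; constructor <;> linarith)
      (by rw [abs_le]; constructor <;> linarith)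
    have h2 := hφB (x0 - s) (t0 + y) (by rw [abs_le]; constructor <;> linarith)
      (by rw [abs_le]; constructor <;> linarith)
    rw [abs_le] at h1 h2
    linarith
  have hkle : k (s, y) ≤ 0 := by
    have hss : 0 ≤ s * (1/2 - s) := mul_nonneg hs0 (by linarith)
    have hNe : 0 ≤ (N + ε) * (s * (1/2 - s)) := by positivity
    have hkform : k (s, y) = (φ (x0 + s, t0 + y) - φ (x0 - s, t0 + y)) / 2
      - (4 * B * (y ^ 2 + s * (1 - s)) + (N + ε) * (s * (1/2 - s)) / 2) := by
      simp only [hk, hb, hc]; ring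
    by_cases hb1 : s = 0
    · rw [hkform, hb1]
      simp
      positivity
    by_cases hb2 : s = 1/2
    · rw [hkform]
      have : B ≤ 4 * B * (y ^ 2 + s * (1 - s)) := by
        rw [hb2]; nlinarith [mul_nonneg hB (sq_nonneg y)]
      linarith
    by_cases hb3 : y = 1/2 ∨ y = -(1/2)
    · rw [hkform]
      have hy2 : y ^ 2 = 1/4 := by rcases hb3 with h | h <;> rw [h] <;> norm_num
      have : B ≤ 4 * B * (y ^ 2 + s * (1 - s)) := by
        rw [hy2]
        have : 0 ≤ s * (1 - s) := mul_nonneg hs0 (by linarith)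
        nlinarith
      linarith
    push Not at hb3
    exfalso
    have hs0' : 0 < s := lt_of_le_of_ne hs0 (Ne.symm hb1)
    have hs1' : s < 1/2 := lt_of_le_of_ne hs1 hb2
    have hy0' : -(1/2) < y := lt_of_le_of_ne hy0 (Ne.symm hb3.2)
    have hy1' : y < 1/2 := lt_of_le_of_ne hy1 hb3.1
    have hms : IsLocalMax (fun s => k (s, y)) s := by
      filter_upwards [Icc_mem_nhds hs0' hs1'] with s' hs'
      exact hmax ⟨hs', hy0, hy1⟩
    have hmy : IsLocalMax (fun y => k (s, y)) y := by
      filter_upwards [Icc_mem_nhds hy0' hy1'] with y' hy'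
      exact hmax ⟨⟨hs0, hs1⟩, hy'⟩
    have d1 := deriv2_nonpos _ _ hms (by fun_prop)
    have d2 := deriv2_nonpos _ _ hmy (by fun_prop)
    have e1 := sym_deriv2 (fun s => φ (s, t0 + y)) (hux _) x0 (4 * B * y ^ 2) b c s
    have e2 := par_deriv2 (fun t => φ (x0 + s, t)) (fun t => φ (x0 - s, t)) (huy _) (huy _) t0
      (b * s - c * s ^ 2) (4 * B) y
    have f1 : (fun s => k (s, y)) = fun s => (φ (x0 + s, t0 + y) - φ (x0 - s, t0 + y)) / 2
      - (4 * B * y ^ 2 + b * s - c * s ^ 2) := rfl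
    have f2 : (fun y => k (s, y)) = fun y => (φ (x0 + s, t0 + y) - φ (x0 - s, t0 + y)) / 2
      - (b * s - c * s ^ 2 + 4 * B * y ^ 2) := by
      funext y; simp only [hk]; ring
    rw [f1, e1] at d1
    rw [f2, e2] at d2
    have n1 := hN (x0 + s) (t0 + y) (by rw [abs_le]; constructor <;> linarith)
      (by rw [abs_le]; constructor <;> linarith)
    have n2 := hN (x0 - s) (t0 + y) (by rw [abs_le]; constructor <;> linarith)
      (by rw [abs_le]; constructor <;> linarith)
    rw [abs_le] at n1 n2
    simp only [hc] at d1 d2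
    linarith [n1.1, n1.2, n2.1, n2.2]
  have hg : ∀ s ∈ Icc (0:ℝ) (1/2), k (s, 0) ≤ 0 := fun s hs =>
    (hmax (show ((s, 0) : ℝ × ℝ) ∈ R from ⟨hs, by simp⟩)).trans hkle
  have hd := sym_deriv1 (fun s => φ (s, t0)) (hux _) x0 0 b c 0
  have hd2 := hd.tendsto_slope
  have hd3 := hd2.mono_left (nhdsWithin_mono 0 (show Ioi (0:ℝ) ⊆ {0}ᶜ from
    fun x hx => ne_of_gt hx))
  have hle := le_of_tendsto hd3 (b := 0) (by
    filter_upwards [Ioc_mem_nhdsGT (show (0:ℝ) < 1/2 by norm_num)] with s hs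
    rw [slope_def_field]
    have := hg s ⟨hs.1.le, hs.2⟩
    simp only [hk] at this
    apply div_nonpos_of_nonpos_of_nonneg
    · simp at this ⊢
      linarith
    · linarith [hs.1])
  simp at hle
  rw [hb] at hle
  linarith

lemma grad_est (φ : ℝ × ℝ → ℝ) (hφ : ContDiff ℝ 2 φ) (x0 t0 B N : ℝ) (hB : 0 ≤ B)
    (hφB : ∀ x y, |x - x0| ≤ 1/2 → |y - t0| ≤ 1/2 → |φ (x, y)| ≤ B)
    (hN : ∀ x y, |x - x0| ≤ 1/2 → |y - t0| ≤ 1/2 →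
      |deriv (deriv fun s => φ (s, y)) x + deriv (deriv fun s => φ (x, s)) y| ≤ N) :
    |deriv (fun s => φ (s, t0)) x0| ≤ 4 * B + N / 4 := by
  have h1 := grad_upper φ hφ x0 t0 B N hB hφB hN
  have h2 := grad_upper (fun z => -φ z) hφ.neg x0 t0 B N hB
    (by intro x y hx hy; rw [abs_neg]; exact hφB x y hx hy)
    (by
      intro x y hx hy
      have := hN x y hx hy
      simp only [deriv.fun_neg', deriv.fun_neg]
      rw [← neg_add, abs_neg]; exact this)
  simp only [deriv.fun_neg] at h2
  rw [abs_le]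
  constructor <;> linarith

end LPN
namespace LPN

lemma px (g : ℝ × ℝ → ℝ) (hg : Differentiable ℝ g) (x y : ℝ) :
    HasDerivAt (fun s => g (s, y)) (fderiv ℝ g (x, y) (1, 0)) x := by
  have h1 : HasDerivAt (fun s : ℝ => ((s, y) : ℝ × ℝ)) ((1 : ℝ), (0 : ℝ)) x :=
    (hasDerivAt_id x).prodMk (hasDerivAt_const x y)
  exact (hg (x, y)).hasFDerivAt.comp_hasDerivAt x h1

lemma py (g : ℝ × ℝ → ℝ) (hg : Differentiable ℝ g) (x y : ℝ) :
    HasDerivAt (fun s => g (x, s)) (fderiv ℝ g (x, y) (0, 1)) y := by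
  have h1 : HasDerivAt (fun s : ℝ => ((x, s) : ℝ × ℝ)) ((0 : ℝ), (1 : ℝ)) y :=
    (hasDerivAt_const y x).prodMk (hasDerivAt_id y)
  exact (hg (x, y)).hasFDerivAt.comp_hasDerivAt y h1

lemma px_contDiff (g : ℝ × ℝ → ℝ) (n : ℕ) (hg : ContDiff ℝ (n + 1) g) :
    ContDiff ℝ n (fun z : ℝ × ℝ => deriv (fun s => g (s, z.2)) z.1) := by
  have hd : Differentiable ℝ g := hg.differentiable (by simp)
  have : (fun z : ℝ × ℝ => deriv (fun s => g (s, z.2)) z.1) = fun z => fderiv ℝ g z (1, 0) :=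
    funext fun z => (px g hd z.1 z.2).deriv
  rw [this]
  exact (hg.fderiv_right le_rfl).clm_apply contDiff_const

lemma py_contDiff (g : ℝ × ℝ → ℝ) (n : ℕ) (hg : ContDiff ℝ (n + 1) g) :
    ContDiff ℝ n (fun z : ℝ × ℝ => deriv (fun s => g (z.1, s)) z.2) := by
  have hd : Differentiable ℝ g := hg.differentiable (by simp)
  have : (fun z : ℝ × ℝ => deriv (fun s => g (z.1, s)) z.2) = fun z => fderiv ℝ g z (0, 1) :=
    funext fun z => (py g hd z.1 z.2).deriv
  rw [this]
  exact (hg.fderiv_right le_rfl).clm_apply contDiff_const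

lemma param_int (g : ℝ × ℝ → ℝ) (hg : ContDiff ℝ 1 g) (x y : ℝ) :
    HasDerivAt (fun x => ∫ t in (0:ℝ)..y, g (x, t))
      (∫ t in (0:ℝ)..y, deriv (fun s => g (s, t)) x) x := by
  have hc : Continuous (fun z : ℝ × ℝ => deriv (fun s => g (s, z.2)) z.1) :=
    (px_contDiff g 0 (by simpa using hg)).continuous
  have hgc := hg.continuous
  have hd : Differentiable ℝ g := hg.differentiable (by simp)
  obtain ⟨K, hK⟩ := ((isCompact_closedBall x 1).prod (isCompact_uIcc (a := (0:ℝ)) (b := y))).exists_bound_of_continuousOn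
    hc.continuousOn
  refine (intervalIntegral.hasDerivAt_integral_of_dominated_loc_of_deriv_le
    (F := fun x t => g (x, t)) (F' := fun x t => deriv (fun s => g (s, t)) x)
    (bound := fun _ => K) (Metric.closedBall_mem_nhds x one_pos) ?_ ?_ ?_ ?_ ?_ ?_).2
  · refine Filter.Eventually.of_forall fun x' => ?_
    exact (by fun_prop : Continuous fun t => g (x', t)).aestronglyMeasurable
  · exact (by fun_prop : Continuous fun t => g (x, t)).intervalIntegrable _ _
  · exact (hc.comp (by fun_prop : Continuous fun t : ℝ => (x, t))).aestronglyMeasurable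
  · refine Filter.Eventually.of_forall fun t ht x' hx' => ?_
    exact hK (x', t) ⟨hx', uIoc_subset_uIcc ht⟩
  · simp
  · refine Filter.Eventually.of_forall fun t ht x' hx' => ?_
    exact (px g hd x' t).differentiableAt.hasDerivAt

lemma c1_of_partials (g g1 g2 : ℝ × ℝ → ℝ) (U : Set (ℝ × ℝ)) (hU : IsOpen U)
    (h1 : ∀ u ∈ U, HasDerivAt (fun s => g (s, u.2)) (g1 u) u.1)
    (h2 : ∀ u ∈ U, HasDerivAt (fun s => g (u.1, s)) (g2 u) u.2)
    (c1 : ContinuousOn g1 U) (c2 : ContinuousOn g2 U) :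
    ContDiffOn ℝ 1 g U ∧ ∀ u ∈ U, HasFDerivAt g
      (g1 u • ContinuousLinearMap.fst ℝ ℝ ℝ + g2 u • ContinuousLinearMap.snd ℝ ℝ ℝ) u := by
  have key : ∀ u ∈ U, HasFDerivAt g
      (g1 u • ContinuousLinearMap.fst ℝ ℝ ℝ + g2 u • ContinuousLinearMap.snd ℝ ℝ ℝ) u := by
    intro u hu
    have hn : ∀ᶠ v in nhds u, v ∈ U := hU.mem_nhds hu
    have := hasStrictFDerivAt_uncurry_coprod (𝕜 := ℝ) (u := u) (f := fun a b => g (a, b))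
      (f₁ := fun a b => ContinuousLinearMap.toSpanSingleton ℝ (g1 (a, b)))
      (f₂ := fun a b => ContinuousLinearMap.toSpanSingleton ℝ (g2 (a, b)))
      (hn.mono fun v hv => (h1 v hv).hasFDerivAt) (hn.mono fun v hv => (h2 v hv).hasFDerivAt)
      (by
        have := c1.continuousAt (hU.mem_nhds hu)
        exact (ContinuousLinearMap.toSpanSingletonCLE (𝕜 := ℝ) (E := ℝ)).continuous.continuousAt.comp this)
      (by
        have := c2.continuousAt (hU.mem_nhds hu)
        exact (ContinuousLinearMap.toSpanSingletonCLE (𝕜 := ℝ) (E := ℝ)).continuous.continuousAt.comp this)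
    have h3 := this.hasFDerivAt
    refine HasFDerivAt.congr_fderiv (f := g) h3 ?_
    ext <;> simp [Function.HasUncurry.uncurry]
  refine ⟨?_, key⟩
  have e : (1 : WithTop ℕ∞) = 0 + 1 := by simp
  rw [e, contDiffOn_succ_iff_hasFDerivWithinAt_of_uniqueDiffOn hU.uniqueDiffOn]
  refine ⟨by simp, _, ?_, fun x hx => (key x hx).hasFDerivWithinAt⟩
  rw [contDiffOn_zero]
  fun_prop

end LPN
namespace LPN

lemma build (V p : ℝ → ℝ) (φ : ℝ × ℝ → ℝ) (hφ : ContDiff ℝ 2 φ)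
    (heq : ∀ x y : ℝ,
          -(deriv (deriv (fun s => φ (s, y))) x + deriv (deriv (fun s => φ (x, s))) y)
            + V x * φ (x, y) = 0)
    (hneu : ∀ x : ℝ, deriv (fun s => φ (x, s)) 0 = 0)
    (hp : ∀ t ∈ Ioo (-(3/2) : ℝ) (3/2), HasDerivAt p (V t - p t ^ 2) t) :
    ∃ ψ : ℝ × ℝ → ℝ,
      (∀ x y, ψ (x, y) = ∫ t in (0:ℝ)..y, (deriv (fun s => φ (s, t)) x - p x * φ (x, t))) ∧
      ContDiffOn ℝ 1 (fun z : ℂ => (φ (z.re, z.im) : ℂ) + Complex.I * ψ (z.re, z.im))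
        (Metric.ball 0 (7/5)) ∧
      ∀ z ∈ Metric.ball (0:ℂ) (7/5),
        dbar (fun z : ℂ => (φ (z.re, z.im) : ℂ) + Complex.I * ψ (z.re, z.im)) z =
          p z.re * (starRingEnd ℂ) ((φ (z.re, z.im) : ℂ) + Complex.I * ψ (z.re, z.im)) := by
  set φx : ℝ × ℝ → ℝ := fun z => deriv (fun s => φ (s, z.2)) z.1 with hφx
  set φy : ℝ × ℝ → ℝ := fun z => deriv (fun s => φ (z.1, s)) z.2 with hφy
  have hφ' : ContDiff ℝ ((1:ℕ) + 1) φ := by simpa [one_add_one_eq_two] using hφ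
  have cφx : ContDiff ℝ 1 φx := by simpa using px_contDiff φ 1 hφ'
  have cφy : ContDiff ℝ 1 φy := by simpa using py_contDiff φ 1 hφ'
  have hφ1 : ContDiff ℝ 1 φ := hφ.of_le (by norm_num)
  have dφ : Differentiable ℝ φ := hφ.differentiable (by simp)
  have kφ : Continuous φ := hφ.continuous
  have kφx : Continuous φx := cφx.continuous
  have kφy : Continuous φy := cφy.continuous
  set G1 : ℝ × ℝ → ℝ := fun z => ∫ t in (0:ℝ)..z.2, φx (z.1, t) with hG1
  set G2 : ℝ × ℝ → ℝ := fun z => ∫ t in (0:ℝ)..z.2, φ (z.1, t) with hG2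
  have kG1 : Continuous G1 :=
    intervalIntegral.continuous_parametric_primitive_of_continuous (f := fun x t => φx (x, t)) kφx
  have kG2 : Continuous G2 :=
    intervalIntegral.continuous_parametric_primitive_of_continuous (f := fun x t => φ (x, t)) kφ
  set ψ : ℝ × ℝ → ℝ := fun z => G1 z - p z.1 * G2 z with hψ
  have hii : ∀ (g : ℝ × ℝ → ℝ) (_ : Continuous g) (x a b : ℝ),
      IntervalIntegrable (fun t => g (x, t)) volume a b := fun g hg x a b =>
    (by fun_prop : Continuous fun t => g (x, t)).intervalIntegrable _ _
  have hψi : ∀ x y, ψ (x, y) = ∫ t in (0:ℝ)..y, (φx (x, t) - p x * φ (x, t)) := by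
    intro x y
    rw [intervalIntegral.integral_sub (hii _ kφx x _ _) ((hii _ kφ x _ _).const_mul _),
      intervalIntegral.integral_const_mul]
  set U : Set (ℝ × ℝ) := Ioo (-(3/2) : ℝ) (3/2) ×ˢ univ with hU
  have hUo : IsOpen U := isOpen_Ioo.prod isOpen_univ
  have kp : ContinuousOn (fun z : ℝ × ℝ => p z.1) U := by
    intro z hz
    have : ContinuousAt p z.1 := (hp z.1 hz.1).continuousAt
    exact (this.comp continuous_fst.continuousAt).continuousWithinAt
  set ψ1 : ℝ × ℝ → ℝ := fun z => - φy z - p z.1 * ψ z with hψ1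
  set ψ2 : ℝ × ℝ → ℝ := fun z => φx z - p z.1 * φ z with hψ2
  have kψ : ContinuousOn ψ U := kG1.continuousOn.sub (kp.mul kG2.continuousOn)
  have h2 : ∀ u ∈ U, HasDerivAt (fun s => ψ (u.1, s)) (ψ2 u) u.2 := by
    rintro ⟨x, y⟩ _
    simp only [hψ, hψ2, hG1, hG2]
    have a1 : Continuous fun t => φx (x, t) := by fun_prop
    have a2 : Continuous fun t => φ (x, t) := by fun_prop
    have e1 := intervalIntegral.integral_hasDerivAt_right (a1.intervalIntegrable 0 y)
      (a1.stronglyMeasurableAtFilter _ _) a1.continuousAt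
    have e2 := intervalIntegral.integral_hasDerivAt_right (a2.intervalIntegrable 0 y)
      (a2.stronglyMeasurableAtFilter _ _) a2.continuousAt
    exact e1.sub (e2.const_mul (p x))
  have h1 : ∀ u ∈ U, HasDerivAt (fun s => ψ (s, u.2)) (ψ1 u) u.1 := by
    rintro ⟨x, y⟩ hu
    have e1 := param_int φx cφx x y
    have e2 := param_int φ hφ1 x y
    have e3 := hp x hu.1
    have e4 := e1.sub (e3.mul e2)
    refine HasDerivAt.congr_deriv (f := fun s => ψ (s, y)) e4 ?_
    have b1 : ∀ t, deriv (fun s => φx (s, t)) x = V x * φ (x, t) - deriv (fun s => φy (x, s)) t := by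
      intro t
      have := heq x t
      simp only [hφx, hφy]
      linarith
    have kyy : Continuous fun t => deriv (fun s => φy (x, s)) t :=
      ((py_contDiff φy 0 (by simpa using cφy)).continuous.comp
        (by fun_prop : Continuous fun t : ℝ => (x, t)))
    have b2 : ∫ t in (0:ℝ)..y, deriv (fun s => φy (x, s)) t = φy (x, y) - φy (x, 0) := by
      refine intervalIntegral.integral_eq_sub_of_hasDerivAt
        (f := fun s => φy (x, s)) ?_ (kyy.intervalIntegrable _ _)
      intro t _
      exact (py φy (cφy.differentiable (by simp)) x t).differentiableAt.hasDerivAt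
    have b3 : φy (x, 0) = 0 := hneu x
    have b4 : ∫ t in (0:ℝ)..y, deriv (fun s => φx (s, t)) x = V x * G2 (x, y) - φy (x, y) := by
      simp only [b1]
      rw [intervalIntegral.integral_sub ((hii _ kφ x _ _).const_mul _) (kyy.intervalIntegrable _ _),
        intervalIntegral.integral_const_mul, b2, b3, sub_zero]
    have b5 : ∫ t in (0:ℝ)..y, deriv (fun s => φ (s, t)) x = G1 (x, y) := rfl
    have b6 : ∫ t in (0:ℝ)..y, φ (x, t) = G2 (x, y) := rfl
    rw [b4, b5, b6]
    simp only [hψ1, hψ]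
    ring
  obtain ⟨cψ, fψ⟩ := c1_of_partials ψ ψ1 ψ2 U hUo h1 h2
    (kφy.neg.continuousOn.sub (kp.mul kψ)) (kφx.continuousOn.sub (kp.mul kφ.continuousOn))
  obtain ⟨_, fφ⟩ := c1_of_partials φ φx φy univ isOpen_univ
    (fun u _ => (px φ dφ u.1 u.2).differentiableAt.hasDerivAt)
    (fun u _ => (py φ dφ u.1 u.2).differentiableAt.hasDerivAt) kφx.continuousOn kφy.continuousOn
  have hmaps : ∀ z ∈ Metric.ball (0:ℂ) (7/5), ((z.re, z.im) : ℝ × ℝ) ∈ U := by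
    intro z hz
    rw [mem_ball_zero_iff] at hz
    have := abs_lt.mp ((Complex.abs_re_le_norm z).trans_lt hz)
    exact ⟨⟨by linarith, by linarith⟩, mem_univ _⟩
  refine ⟨ψ, hψi, ?_, ?_⟩
  · have e : ContDiff ℝ 1 (fun z : ℂ => ((z.re, z.im) : ℝ × ℝ)) :=
      Complex.reCLM.contDiff.prodMk Complex.imCLM.contDiff
    have g1 : ContDiffOn ℝ 1 (fun z : ℂ => ψ (z.re, z.im)) (Metric.ball 0 (7/5)) :=
      cψ.comp e.contDiffOn hmaps
    have g2 : ContDiffOn ℝ 1 (fun z : ℂ => φ (z.re, z.im)) (Metric.ball 0 (7/5)) :=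
      (hφ1.comp e).contDiffOn
    have g3 := Complex.ofRealCLM.contDiff.comp_contDiffOn g1
    have g4 := Complex.ofRealCLM.contDiff.comp_contDiffOn g2
    exact g4.add (contDiffOn_const.mul g3)
  · intro z hz
    have e : HasFDerivAt (fun z : ℂ => ((z.re, z.im) : ℝ × ℝ))
        (Complex.reCLM.prod Complex.imCLM) z :=
      Complex.reCLM.hasFDerivAt.prodMk Complex.imCLM.hasFDerivAt
    have g1 := (fψ _ (hmaps z hz)).comp z e
    have g2 := (fφ (z.re, z.im) (mem_univ _)).comp z e
    have g3 := Complex.ofRealCLM.hasFDerivAt.comp z g1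
    have g4 := Complex.ofRealCLM.hasFDerivAt.comp z g2
    have g5 : HasFDerivAt (fun z : ℂ => (φ (z.re, z.im) : ℂ) + Complex.I * ψ (z.re, z.im)) _ z :=
      g4.add (g3.const_mul Complex.I)
    unfold dbar
    rw [g5.fderiv]
    simp [hψ1, hψ2]
    linear_combination ((φx (z.re, z.im) : ℂ) - p z.re * φ (z.re, z.im)) * Complex.I_sq

end LPN
namespace LPN

lemma core (M m : ℝ) (hM1 : 1 ≤ M) (hm : 0 < m) :
    ∃ C : ℝ, 0 < C ∧ ∀ V : ℝ → ℝ, Continuous V → (∀ x, |V x| ≤ M) → (∀ x, 1 ≤ V x) →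
      ∀ ω : Set ℝ, MeasurableSet ω → ω ⊆ Icc (-(1/2) : ℝ) (1/2) → volume ω = ENNReal.ofReal m →
      ∀ φ : ℝ × ℝ → ℝ, ContDiff ℝ 2 φ →
        (∀ x y : ℝ,
          -(deriv (deriv (fun s => φ (s, y))) x + deriv (deriv (fun s => φ (x, s))) y)
            + V x * φ (x, y) = 0) →
        (∀ x : ℝ, deriv (fun s => φ (x, s)) 0 = 0) →
      ∀ δ B : ℝ, 0 ≤ δ → 0 ≤ B → (∀ x y, |x| ≤ 3/2 → |y| ≤ 3/2 → |φ (x, y)| ≤ B) →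
        (∀ x ∈ ω, |φ (x, 0)| ≤ δ) →
      ∀ (n : ℕ) (x y : ℝ), |x| ≤ 1/2 → |y| ≤ 1/2 →
        |φ (x, y)| ≤ C * ((16 * Real.exp 1 / m) ^ n * δ + (24/25) ^ n * B) := by
  obtain ⟨C0, hC0, hsim⟩ := similarity
  set E : ℝ := Real.exp (C0 * (M + 1)) with hE
  have hE0 : 0 < E := Real.exp_pos _
  set S0 : ℝ := 5 + M / 4 + (M + 1) with hS0
  have hS0p : 0 < S0 := by positivity
  have he0 : 0 < Real.exp 1 := Real.exp_pos _
  refine ⟨E ^ 2 * (2 * Real.exp 1 + S0), by positivity, ?_⟩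
  intro V hV hVM hV1 ω hω hsub hvol φ hφ heq hneu δ B hδ0 hB0 hB hδ n x y hx hy
  obtain ⟨p, hp⟩ := riccati V hV M hVM hV1
  obtain ⟨ψ, hψ, hf1, hdb⟩ := build V p φ hφ heq hneu (fun t ht => (hp t ht).1)
  set f : ℂ → ℂ := fun z => (φ (z.re, z.im) : ℂ) + Complex.I * ψ (z.re, z.im) with hf
  have hgrad : ∀ x t, |x| ≤ 1 → |t| ≤ 1 → |deriv (fun s => φ (s, t)) x| ≤ (4 + M / 4) * B := by
    intro x t hx ht
    have aux : ∀ a b : ℝ, |a - b| ≤ 1/2 → |b| ≤ 1 → |a| ≤ 3/2 := by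
      intro a b h1 h2
      have := abs_add_le (a - b) b
      rw [sub_add_cancel] at this
      linarith
    have := grad_est φ hφ x t B (M * B) hB0
      (fun x' y' h1 h2 => hB x' y' (aux _ _ h1 hx) (aux _ _ h2 ht))
      (fun x' y' h1 h2 => by
        have h3 := heq x' y'
        have h4 : deriv (deriv fun s => φ (s, y')) x' + deriv (deriv fun s => φ (x', s)) y'
          = V x' * φ (x', y') := by linarith
        rw [h4, abs_mul]
        exact mul_le_mul (hVM x') (hB x' y' (aux _ _ h1 hx) (aux _ _ h2 ht)) (abs_nonneg _)
          (by linarith))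
    linarith
  have hψb : ∀ x y, |x| ≤ 1 → |y| ≤ 1 → |ψ (x, y)| ≤ ((4 + M / 4) + (M + 1)) * B := by
    intro x y hx hy
    rw [hψ x y]
    have hxx : x ∈ Ioo (-(3/2) : ℝ) (3/2) := by
      rw [abs_le] at hx; constructor <;> linarith
    have := intervalIntegral.norm_integral_le_of_norm_le_const (a := (0:ℝ)) (b := y)
      (f := fun t => deriv (fun s => φ (s, t)) x - p x * φ (x, t))
      (C := ((4 + M / 4) + (M + 1)) * B) (by
        intro t ht
        have ht1 : |t| ≤ 1 := by
          have h5 := abs_sub_left_of_mem_uIcc (uIoc_subset_uIcc ht)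
          simp only [sub_zero] at h5
          exact h5.trans hy
        rw [Real.norm_eq_abs]
        refine (abs_sub _ _).trans ?_
        rw [abs_mul]
        have h6 := hgrad x t hx ht1
        have h7 : |p x| * |φ (x, t)| ≤ (M + 1) * B :=
          mul_le_mul (hp x hxx).2 (hB x t (by linarith) (by linarith)) (abs_nonneg _) (by linarith)
        linarith)
    rw [Real.norm_eq_abs] at this
    refine this.trans ?_
    rw [sub_zero]
    exact mul_le_of_le_one_right (by positivity) hy
  have hψ0 : ∀ x, ψ (x, 0) = 0 := by intro x; rw [hψ]; simp
  have hfS : ∀ z : ℂ, ‖z‖ ≤ 1 → ‖f z‖ ≤ S0 * B := by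
    intro z hz
    have h1 := (Complex.abs_re_le_norm z).trans hz
    have h2 := (Complex.abs_im_le_norm z).trans hz
    refine (norm_add_le _ _).trans ?_
    rw [norm_mul, Complex.norm_I, one_mul, Complex.norm_real, Complex.norm_real,
      Real.norm_eq_abs, Real.norm_eq_abs]
    have := hψb _ _ h1 h2
    have h3 := hB z.re z.im (by linarith) (by linarith)
    rw [hS0]; linarith
  have hfω : ∀ x ∈ ω, ‖f (x : ℝ)‖ ≤ δ := by
    intro x hx
    simp only [hf, Complex.ofReal_re, Complex.ofReal_im, hψ0]
    simpa using hδ x hx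
  have hfφ : ∀ x y : ℝ, |φ (x, y)| ≤ ‖f ⟨x, y⟩‖ := by
    intro x y
    have := Complex.abs_re_le_norm (f ⟨x, y⟩)
    simpa [hf] using this
  have hball : ∀ z ∈ Metric.ball (0:ℂ) (7/5), z.re ∈ Ioo (-(3/2) : ℝ) (3/2) := by
    intro z hz
    rw [mem_ball_zero_iff] at hz
    have := abs_lt.mp ((Complex.abs_re_le_norm z).trans_lt hz)
    exact ⟨by linarith, by linarith⟩
  have hpc : ContDiffOn ℝ 1 (fun z : ℂ => p z.re) (Metric.ball 0 (7/5)) := by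
    have hpI : ContDiffOn ℝ 1 p (Ioo (-(3/2) : ℝ) (3/2)) := by
      rw [contDiffOn_one_iff_derivWithin isOpen_Ioo.uniqueDiffOn]
      have hpd : DifferentiableOn ℝ p (Ioo (-(3/2) : ℝ) (3/2)) :=
        fun t ht => (hp t ht).1.differentiableAt.differentiableWithinAt
      refine ⟨hpd, ?_⟩
      have hcc : ContinuousOn (fun t => V t - p t ^ 2) (Ioo (-(3/2) : ℝ) (3/2)) :=
        hV.continuousOn.sub (hpd.continuousOn.pow 2)
      refine hcc.congr ?_
      intro t ht
      exact (hp t ht).1.hasDerivWithinAt.derivWithin (isOpen_Ioo.uniqueDiffOn t ht)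
    exact hpI.comp Complex.reCLM.contDiff.contDiffOn hball
  set z : ℂ := ⟨x, y⟩ with hz
  have hzn : ‖z‖ ^ 2 ≤ 1/2 := by
    rw [← Complex.normSq_eq_norm_sq, Complex.normSq_apply]
    simp only [hz]
    have h1 : x * x ≤ 1/4 := by rw [← abs_mul_abs_self]; nlinarith [abs_nonneg x]
    have h2 : y * y ≤ 1/4 := by rw [← abs_mul_abs_self]; nlinarith [abs_nonneg y]
    linarith
  have hz1 : ‖z‖ < 11/10 := by nlinarith [norm_nonneg z]
  set A : ℝ := 16 * Real.exp 1 / m with hA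
  have hA0 : 0 < A := by positivity
  set Y : ℝ := E * (2 * Real.exp 1 * A ^ n + (24/25) ^ n + 1) with hY
  have hY0 : 0 < Y := by positivity
  apply le_of_forall_pos_le_add
  intro ε hε
  set η : ℝ := ε / Y with hη
  have hη0 : 0 < η := by positivity
  have hηY : η * Y = ε := by rw [hη]; field_simp
  obtain ⟨s, H, hH, hsH⟩ := hsim f (fun z => p z.re) (M + 1) hf1 hpc (by linarith)
    (fun z hz => (hp _ (hball z hz)).2) hdb η hη0
  have hexp : ∀ w : ℂ, ‖w‖ ≤ C0 * (M + 1) → ‖Complex.exp w‖ ≤ E := by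
    intro w hw
    rw [Complex.norm_exp, hE]
    exact Real.exp_le_exp.mpr ((Complex.re_le_norm w).trans hw)
  have hHf : ∀ w : ℂ, ‖w‖ < 11/10 → ‖H w‖ ≤ E * ‖f w‖ + η := by
    intro w hw
    obtain ⟨h1, h2⟩ := hsH w (by simpa using hw)
    have h3 : ‖H w‖ ≤ ‖H w - Complex.exp (-s w) * f w‖ + ‖Complex.exp (-s w) * f w‖ := by
      have := norm_add_le (H w - Complex.exp (-s w) * f w) (Complex.exp (-s w) * f w)
      simpa using this
    have h4 : ‖Complex.exp (-s w) * f w‖ ≤ E * ‖f w‖ := by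
      rw [norm_mul]
      exact mul_le_mul_of_nonneg_right (hexp _ (by rwa [norm_neg])) (norm_nonneg _)
    linarith
  have hfH : ‖f z‖ ≤ E * (‖H z‖ + η) := by
    obtain ⟨h1, h2⟩ := hsH z (by simpa using hz1)
    have h3 : ‖Complex.exp (-s z) * f z‖ ≤ ‖H z‖ + η := by
      have := norm_sub_le (H z) (H z - Complex.exp (-s z) * f z)
      rw [sub_sub_cancel] at this
      linarith
    have h4 : f z = Complex.exp (s z) * (Complex.exp (-s z) * f z) := by
      rw [← mul_assoc, ← Complex.exp_add, add_neg_cancel, Complex.exp_zero, one_mul]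
    rw [h4, norm_mul]
    exact mul_le_mul (hexp _ h1) h3 (norm_nonneg _) hE0.le
  have hest := holo_est ω hω hsub m hm hvol n H (E * δ + η) (E * (S0 * B) + η) hH (by positivity)
    (fun x hx => by
      have hxb : ‖((x : ℝ) : ℂ)‖ < 11/10 := by
        rw [Complex.norm_real, Real.norm_eq_abs]
        have := abs_le.mpr (hsub hx)
        linarith
      have := hHf _ hxb
      have h2 := mul_le_mul_of_nonneg_left (hfω x hx) hE0.le
      linarith)
    (fun w hw => by
      have := hHf w (by linarith)
      have h2 := mul_le_mul_of_nonneg_left (hfS w hw) hE0.le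
      linarith) z hzn
  have hmain : |φ (x, y)| ≤ E * ((2 * Real.exp 1 * A ^ n * (E * δ + η) +
      (24/25) ^ n * (E * (S0 * B) + η)) + η) :=
    (hfφ x y).trans (hfH.trans (mul_le_mul_of_nonneg_left (by linarith) hE0.le))
  refine hmain.trans ?_
  have hid : E * ((2 * Real.exp 1 * A ^ n * (E * δ + η) +
      (24/25) ^ n * (E * (S0 * B) + η)) + η) =
      E ^ 2 * (2 * Real.exp 1 * (A ^ n * δ) + S0 * ((24/25) ^ n * B)) + η * Y := by
    rw [hY]; ring
  rw [hid, hηY]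
  have q1 : 0 ≤ A ^ n * δ := by positivity
  have q2 : 0 ≤ (24/25 : ℝ) ^ n * B := by positivity
  have : 2 * Real.exp 1 * (A ^ n * δ) + S0 * ((24/25) ^ n * B) ≤
      (2 * Real.exp 1 + S0) * (A ^ n * δ + (24/25) ^ n * B) := by nlinarith [mul_nonneg hS0p.le q1, mul_nonneg he0.le q2]
  nlinarith [mul_le_mul_of_nonneg_left this (sq_nonneg E)]

end LPN
namespace LPN

lemma opt (A : ℝ) (hA : 0 < A) :
    ∃ α : ℝ, α ∈ Ioo (0:ℝ) 1 ∧ ∃ K : ℝ, 0 < K ∧ ∀ C X δ B : ℝ, 0 < C → 0 ≤ δ → δ ≤ B →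
      (∀ n : ℕ, X ≤ C * (A ^ n * δ + (24/25) ^ n * B)) → X ≤ C * K * δ ^ α * B ^ (1 - α) := by
  set q : ℝ := 24/25 with hq
  have hq0 : 0 < q := by norm_num [hq]
  have hlq : 0 < Real.log (1 / q) := Real.log_pos (by norm_num [hq])
  have hlA : 0 < Real.log (A + 1) := Real.log_pos (by linarith)
  have hAq : Real.log ((A + 1) / q) = Real.log (A + 1) + Real.log (1 / q) := by
    rw [← Real.log_mul (by positivity) (by positivity)]; congr 1; ring
  set L := Real.log ((A + 1) / q) with hL
  have hL0 : 0 < L := by linarith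
  set α := Real.log (1 / q) / L with hα
  have hα0 : 0 < α := by positivity
  have hα1 : α < 1 := by rw [hα, div_lt_one hL0]; linarith
  refine ⟨α, ⟨hα0, hα1⟩, 2 / q, by positivity, ?_⟩
  intro C X δ B hC hδ hδB hX
  rcases hδ.eq_or_lt with h0 | hpos
  · subst h0
    rw [Real.zero_rpow hα0.ne', mul_zero, zero_mul]
    have ht : Filter.Tendsto (fun n : ℕ => C * (A ^ n * 0 + q ^ n * B)) Filter.atTop (nhds 0) := by
      have := ((tendsto_pow_atTop_nhds_zero_of_lt_one hq0.le (by norm_num [hq] : q < 1)).mul_const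
        B).const_mul C
      simpa using this
    exact ge_of_tendsto' ht hX
  · have hB : 0 < B := hpos.trans_le hδB
    set t := δ / B with ht
    have ht0 : 0 < t := by positivity
    have ht1 : t ≤ 1 := (div_le_one hB).mpr hδB
    have hlt : 0 ≤ Real.log (1 / t) := Real.log_nonneg (by rw [le_div_iff₀ ht0]; linarith)
    set n := ⌊Real.log (1 / t) / L⌋₊ with hn
    have n1 : (n : ℝ) ≤ Real.log (1 / t) / L := Nat.floor_le (by positivity)
    have n2 : Real.log (1 / t) / L < n + 1 := Nat.lt_floor_add_one _
    rw [le_div_iff₀ hL0] at n1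
    have s1 : ((A + 1) / q) ^ n ≤ 1 / t := by
      rw [← Real.exp_log (by positivity : 0 < ((A + 1) / q) ^ n),
        ← Real.exp_log (by positivity : 0 < 1 / t), Real.log_pow]
      exact Real.exp_le_exp.mpr n1
    have s2 : (A + 1) ^ n * t ≤ q ^ n := by
      rw [div_pow, div_le_div_iff₀ (by positivity) ht0] at s1
      linarith
    have s3 : A ^ n * t ≤ q ^ n :=
      (mul_le_mul_of_nonneg_right (pow_le_pow_left₀ hA.le (by linarith) n) ht0.le).trans s2
    have s4 : q ^ (n + 1) ≤ t ^ α := by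
      rw [Real.rpow_def_of_pos ht0, ← Real.exp_log (by positivity : 0 < q ^ (n + 1)), Real.log_pow]
      apply Real.exp_le_exp.mpr
      have e1 : Real.log t = -Real.log (1 / t) := by simp
      have e2 : Real.log q = -Real.log (1 / q) := by simp
      have e3 := mul_le_mul_of_nonneg_right n2.le hlq.le
      have e4 : Real.log (1 / t) / L * Real.log (1 / q) = Real.log (1 / t) * α := by
        rw [hα]; ring
      rw [e1, e2]; push_cast
      linarith
    have s5 : q ^ n ≤ t ^ α / q := by
      rw [le_div_iff₀ hq0, ← pow_succ]; exact s4
    have s6 : δ = t * B := by rw [ht]; field_simp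
    have s7 : A ^ n * δ + q ^ n * B ≤ 2 / q * t ^ α * B := by
      rw [s6]
      have : A ^ n * t + q ^ n ≤ 2 / q * t ^ α := by
        have : 2 / q * t ^ α = 2 * (t ^ α / q) := by ring
        rw [this]; linarith
      nlinarith
    have s8 : t ^ α * B = δ ^ α * B ^ (1 - α) := by
      rw [ht, Real.div_rpow hδ hB.le, Real.rpow_sub hB, Real.rpow_one]
      field_simp
    calc X ≤ C * (A ^ n * δ + q ^ n * B) := hX n
      _ ≤ C * (2 / q * t ^ α * B) := mul_le_mul_of_nonneg_left s7 hC.le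
      _ = C * (2 / q) * (t ^ α * B) := by ring
      _ = _ := by rw [s8]; ring

lemma bisup_le {T : Type*} (S : Set T) (g : T → ℝ) (K : ℝ) (hK : 0 ≤ K) (h : ∀ z ∈ S, g z ≤ K) :
    (⨆ z ∈ S, g z) ≤ K :=
  Real.iSup_le (fun z => Real.iSup_le (fun hz => h z hz) hK) hK

lemma le_bisup {T : Type*} (S : Set T) (g : T → ℝ) (K : ℝ) (hK : 0 ≤ K) (h : ∀ z ∈ S, g z ≤ K)
    (z : T) (hz : z ∈ S) : g z ≤ ⨆ z ∈ S, g z := by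
  have h1 : BddAbove (range fun z => ⨆ (_ : z ∈ S), g z) := by
    refine ⟨K, ?_⟩
    rintro _ ⟨w, rfl⟩
    exact Real.iSup_le (fun hw => h w hw) hK
  have h2 := le_ciSup h1 z
  simp only [ciSup_pos hz] at h2
  exact h2

end LPN

/-- **L^∞ propagation of smallness for `-Δφ + V(x)φ = 0` with Neumann condition on `{y = 0}`.**
For `V` continuous, bounded, with `V ≥ 1`, and `ω ⊆ [ℓ, ℓ+1]` measurable with `|ω| = m > 0`,
there are `α ∈ (0,1)` and `C > 0`, depending only on `V` and `m`, such that every real-valued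
`H²_loc` solution `φ` of `-Δφ + V(x)φ = 0` on `ℝ²` with `∂_y φ(x,0) = 0` satisfies
`sup_{D₁ℓ}|φ| ≤ C (sup_{ω×{0}} |φ|)^α (sup_{D₂ℓ}|φ|)^{1-α}`,
where `D₁ℓ = [ℓ,ℓ+1] × [-1/2,1/2]` and `D₂ℓ = [ℓ-1,ℓ+2] × [-3/2,3/2]`. -/
theorem linfty_propagation_neumann
    (V : ℝ → ℝ) (hVcont : Continuous V) (hVbdd : ∃ M : ℝ, ∀ x : ℝ, |V x| ≤ M)
    (hV1 : ∀ x : ℝ, 1 ≤ V x) (m : ℝ) (hm : 0 < m) :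
    ∃ α : ℝ, α ∈ Ioo (0 : ℝ) 1 ∧ ∃ C > 0,
      ∀ ℓ : ℤ, ∀ ω : Set ℝ, MeasurableSet ω → ω ⊆ Icc (ℓ : ℝ) ((ℓ : ℝ) + 1) →
        volume ω = ENNReal.ofReal m →
      ∀ φ : ℝ × ℝ → ℝ, ContDiff ℝ 2 φ →
        (∀ x y : ℝ,
          -(deriv (deriv (fun s => φ (s, y))) x + deriv (deriv (fun s => φ (x, s))) y)
            + V x * φ (x, y) = 0) →
        (∀ x : ℝ, deriv (fun s => φ (x, s)) 0 = 0) →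
        (⨆ z ∈ (Icc (ℓ : ℝ) ((ℓ : ℝ) + 1) ×ˢ Icc (-(1/2) : ℝ) (1/2)), |φ z|) ≤
          C * (⨆ x ∈ ω, |φ (x, 0)|) ^ α *
            (⨆ z ∈ (Icc ((ℓ : ℝ) - 1) ((ℓ : ℝ) + 2) ×ˢ Icc (-(3/2) : ℝ) (3/2)), |φ z|)
              ^ (1 - α) := by
  obtain ⟨M, hM⟩ := hVbdd
  have hM1 : 1 ≤ M := (hV1 0).trans ((le_abs_self _).trans (hM 0))
  obtain ⟨C, hC, hcore⟩ := LPN.core M m hM1 hm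
  obtain ⟨α, hα, K, hK, hopt⟩ := LPN.opt (16 * Real.exp 1 / m) (by positivity)
  refine ⟨α, hα, C * K, by positivity, ?_⟩
  intro ℓ ω hω hsub hvol φ hφ heq hneu
  set D2 : Set (ℝ × ℝ) := Icc ((ℓ : ℝ) - 1) ((ℓ : ℝ) + 2) ×ˢ Icc (-(3/2) : ℝ) (3/2) with hD2
  obtain ⟨K2, hK2⟩ := (isCompact_Icc.prod isCompact_Icc : IsCompact D2).exists_bound_of_continuousOn
    hφ.continuous.continuousOn
  simp only [Real.norm_eq_abs] at hK2
  have hz0 : ((ℓ : ℝ), (0 : ℝ)) ∈ D2 := by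
    simp only [hD2, mem_prod, mem_Icc]
    refine ⟨⟨?_, ?_⟩, ?_, ?_⟩ <;> linarith
  have hK20 : 0 ≤ K2 := (abs_nonneg _).trans (hK2 _ hz0)
  set B : ℝ := ⨆ z ∈ D2, |φ z| with hB
  have hBz : ∀ z ∈ D2, |φ z| ≤ B := LPN.le_bisup D2 (fun z => |φ z|) K2 hK20 hK2
  have hB0 : 0 ≤ B := (abs_nonneg _).trans (hBz _ hz0)
  have hωD : ∀ x ∈ ω, ((x, 0) : ℝ × ℝ) ∈ D2 := by
    intro x hx
    have := hsub hx
    simp only [hD2, mem_prod, mem_Icc] at this ⊢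
    refine ⟨⟨?_, ?_⟩, ?_, ?_⟩ <;> linarith [this.1, this.2]
  set δ : ℝ := ⨆ x ∈ ω, |φ (x, 0)| with hδ
  have hδx : ∀ x ∈ ω, |φ (x, 0)| ≤ δ :=
    LPN.le_bisup ω (fun x => |φ (x, 0)|) B hB0 (fun x hx => hBz _ (hωD x hx))
  have hδB : δ ≤ B := LPN.bisup_le ω (fun x => |φ (x, 0)|) B hB0 (fun x hx => hBz _ (hωD x hx))
  have hδ0 : 0 ≤ δ := Real.iSup_nonneg fun x => Real.iSup_nonneg fun _ => abs_nonneg _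
  have hrhs : 0 ≤ C * K * δ ^ α * B ^ (1 - α) := by positivity
  refine LPN.bisup_le _ (fun z => |φ z|) _ hrhs ?_
  rintro ⟨x, y⟩ ⟨hx, hy⟩
  refine hopt C _ δ B hC hδ0 hδB ?_
  intro n
  set c : ℝ := (ℓ : ℝ) + 1/2 with hc
  have hφ' : ContDiff ℝ 2 (fun z : ℝ × ℝ => φ (z.1 + c, z.2)) := by fun_prop
  have := hcore (fun x => V (x + c)) (by fun_prop) (fun x => hM _) (fun x => hV1 _)
    ((fun x => x + c) ⁻¹' ω) (hω.preimage (by fun_prop))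
    (by
      intro x hx
      have := hsub hx
      simp only [mem_Icc] at this ⊢
      constructor <;> linarith [this.1, this.2])
    (by rw [measure_preimage_add_right, hvol])
    (fun z : ℝ × ℝ => φ (z.1 + c, z.2)) hφ'
    (by
      intro x y
      have h1 := heq (x + c) y
      have h2 : deriv (deriv fun s => φ (s + c, y)) x = deriv (deriv fun s => φ (s, y)) (x + c) := by
        have e1 : (deriv fun s => φ (s + c, y)) = fun x => deriv (fun s => φ (s, y)) (x + c) :=
          funext fun x => deriv_comp_add_const (fun s => φ (s, y)) c x
        rw [e1, deriv_comp_add_const]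
      simp only
      rw [h2]; exact h1)
    (fun x => hneu (x + c)) δ B hδ0 hB0
    (by
      intro x y hx hy
      rw [abs_le] at hx hy
      refine hBz _ ?_
      simp only [hD2, mem_prod, mem_Icc]
      refine ⟨⟨?_, ?_⟩, ?_, ?_⟩ <;> linarith [hx.1, hx.2, hy.1, hy.2])
    (fun x hx => hδx _ hx) n (x - c) y
    (by
      simp only [mem_Icc] at hx
      rw [abs_le]; constructor <;> linarith [hx.1, hx.2])
    (abs_le.mpr hy)
  simpa using this
end
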